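/- Suppose 0 < r ≤ ∞ and 1 ≤ p, q ≤ ∞ satisfy 1/r = 1/q + 1/p. Let a ∈ L^p S^m_ρ with 0 ≤ ρ ≤ 1 and m < n(ρ−1)/min(2, p, q). Then the pseudodifferential operator T_a f(x) = (2π)^{−n} ∫_{ℝⁿ} a(x,ξ) e^{i⟨x,ξ⟩} f̂(ξ) dξ is bounded from L^q(ℝⁿ) to L^r(ℝⁿ): ‖T_a f‖_{L^r} ≤ C ‖f‖_{L^q} for all Schwartz f. -/

import Mathlib

open MeasureTheory Real Complex
open scoped ENNReal NNReal RealInnerProductSpace SchwartzMap Classical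

noncomputable section

/-- `ℝⁿ` as a Euclidean space. -/
abbrev En (n : ℕ) : Type := EuclideanSpace ℝ (Fin n)

/-- Partial derivative in the `i`-th coordinate direction. -/
def pd {n : ℕ} {F : Type} [NormedAddCommGroup F] [NormedSpace ℝ F]
    (i : Fin n) (f : En n → F) : En n → F :=
  fun x => fderiv ℝ f x (EuclideanSpace.single i 1)

/-- Multi-index partial derivative `∂^α`. -/
def mderiv {n : ℕ} {F : Type} [NormedAddCommGroup F] [NormedSpace ℝ F]
    (α : Fin n → ℕ) (f : En n → F) : En n → F :=
  (List.finRange n).foldr (fun i g => (pd i)^[α i] g) f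

/-- The order `|α|` of a multi-index. -/
def mdeg {n : ℕ} (α : Fin n → ℕ) : ℕ := ∑ i, α i

/-- The finite set of multi-indices `α` with every entry `≤ k` and `|α| ≤ k`;
this enumerates all multi-indices of order at most `k`. -/
def multiIdx (n k : ℕ) : Finset (Fin n → ℕ) :=
  (Fintype.piFinset fun _ : Fin n => Finset.range (k + 1)).filter fun α => mdeg α ≤ k

/-- Japanese bracket `⟨ξ⟩^t = (1+|ξ|²)^{t/2}`. -/
def jb {n : ℕ} (ξ : En n) (t : ℝ) : ℝ := (1 + ‖ξ‖ ^ 2) ^ (t / 2)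

/-- The rough amplitude class `L^p S^m_ρ`. -/
def LpSm {n : ℕ} (p : ℝ≥0∞) (m ρ : ℝ) (a : En n → En n → ℂ) : Prop :=
  (∀ x, ContDiff ℝ (⊤ : ℕ∞) (a x)) ∧
  (∀ (α : Fin n → ℕ) (ξ : En n), AEStronglyMeasurable (fun x => mderiv α (a x) ξ) volume) ∧
  ∀ α : Fin n → ℕ, ∃ C : ℝ, ∀ ξ : En n,
    eLpNorm (fun x => mderiv α (a x) ξ) p volume ≤
      ENNReal.ofReal (C * jb ξ (m - ρ * (mdeg α : ℝ)))

/-- The seminorms `|a|_{p,m,s}` of an amplitude in `L^p S^m_ρ`. -/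
def aSemi {n : ℕ} (p : ℝ≥0∞) (m ρ : ℝ) (s : ℕ) (a : En n → En n → ℂ) : ℝ≥0∞ :=
  ∑ α ∈ multiIdx n s, ⨆ ξ : En n,
    ENNReal.ofReal (jb ξ (ρ * (mdeg α : ℝ) - m)) *
      eLpNorm (fun x => mderiv α (a x) ξ) p volume

/-- The mixed derivative `∂_ξ^α ∂_x^β φ(x,ξ)`. -/
def mixedD {n : ℕ} (α β : Fin n → ℕ) (φ : En n → En n → ℝ) (x ξ : En n) : ℝ :=
  mderiv α (fun ζ => mderiv β (fun y => φ y ζ) x) ξ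

/-- The phase function class `Φ^k`. -/
def PhiClass {n : ℕ} (k : ℕ) (φ : En n → En n → ℝ) : Prop :=
  ContDiffOn ℝ (⊤ : ℕ∞) (fun q : En n × En n => φ q.1 q.2) {q | q.2 ≠ 0} ∧
  (∀ (x ξ : En n) (t : ℝ), 0 < t → φ x (t • ξ) = t * φ x ξ) ∧
  ∀ α β : Fin n → ℕ, k ≤ mdeg α + mdeg β →
    ∃ C : ℝ, ∀ (x ξ : En n), ξ ≠ 0 →
      ‖ξ‖ ^ ((mdeg α : ℝ) - 1) * |mixedD α β φ x ξ| ≤ C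

/-- The mixed Hessian matrix `[∂²φ/∂x_j∂ξ_k]`. -/
def mixHess {n : ℕ} (φ : En n → En n → ℝ) (x ξ : En n) : Matrix (Fin n) (Fin n) ℝ :=
  Matrix.of fun j k => pd j (fun y => pd k (φ y) ξ) x

/-- The strong non-degeneracy (SND) condition. -/
def SNDcond {n : ℕ} (φ : En n → En n → ℝ) : Prop :=
  ∃ c : ℝ, 0 < c ∧ ∀ (x ξ : En n), ξ ≠ 0 → c ≤ |(mixHess φ x ξ).det|

/-- The Fourier transform `f̂(ξ) = ∫ e^{-i⟨y,ξ⟩} f(y) dy`. -/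
def ft {n : ℕ} (f : En n → ℂ) (ξ : En n) : ℂ :=
  ∫ y : En n, Complex.exp (-(Complex.I * Complex.ofReal ⟪y, ξ⟫)) * f y

/-- The linear Fourier integral operator
`T_a f(x) = (2π)^{-n} ∫ e^{iφ(x,ξ)} a(x,ξ) f̂(ξ) dξ`. -/
def fio {n : ℕ} (a : En n → En n → ℂ) (φ : En n → En n → ℝ) (f : En n → ℂ)
    (x : En n) : ℂ :=
  (((2 * Real.pi) ^ n)⁻¹ : ℝ) •
    ∫ ξ : En n, Complex.exp (Complex.I * Complex.ofReal (φ x ξ)) * a x ξ * ft f ξ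

/-- The conjugate exponent `p′` of `p ∈ [1,∞]`. -/
def pconj (p : ℝ≥0∞) : ℝ≥0∞ := (1 - p⁻¹)⁻¹

/-- The order `𝔪(ρ,p,q)` from Definition 4.6. -/
def frakm (n : ℕ) (ρ : ℝ) (p q : ℝ≥0∞) : ℝ :=
  if p < 2 ∨ (2 ≤ p ∧ q < pconj p) then
    (n : ℝ) * (ρ - 1) * (min p q)⁻¹.toReal -
      (((n : ℝ) - 1) / 2) * (p⁻¹.toReal + (min p q)⁻¹.toReal)
  else if 2 ≤ q then
    (n : ℝ) * (ρ - 1) / 2 - ((n : ℝ) - 1) * (1 / 2 - q⁻¹.toReal)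
  else
    (n : ℝ) * (ρ - 1) * q⁻¹.toReal -
      (((n : ℝ) - 1) / (1 - 2 * p⁻¹.toReal)) * (q⁻¹.toReal - 1 / 2)

/-- The order `ℳ(ρ,p,q)` from Definition 4.6. -/
def scrM (n : ℕ) (ρ : ℝ) (p q : ℝ≥0∞) : ℝ :=
  (n : ℝ) * (ρ - 1) * q⁻¹.toReal -
    (((n : ℝ) - 1) / (1 + p⁻¹.toReal)) * (q⁻¹.toReal - 1 / 2)

/-- The distribution function `λ_f(s) = |{x : |f(x)| > s}|`. -/
def distFn {n : ℕ} (f : En n → ℂ) (s : ℝ) : ℝ≥0∞ := volume {x : En n | s < ‖f x‖}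

/-- The decreasing rearrangement `f*`. -/
def rearr {n : ℕ} (f : En n → ℂ) (t : ℝ) : ℝ :=
  sInf {s : ℝ | 0 ≤ s ∧ distFn f s ≤ ENNReal.ofReal t}

/-- The Lorentz space quasinorm
`‖f‖_{L^{r,q}} = (∫_0^∞ (t^{1/r} f*(t))^q dt/t)^{1/q}`. -/
def lorentzNorm {n : ℕ} (r q : ℝ≥0∞) (f : En n → ℂ) : ℝ≥0∞ :=
  (∫⁻ t in Set.Ioi (0 : ℝ),
      ENNReal.ofReal ((t ^ r⁻¹.toReal * rearr f t) ^ q.toReal / t)) ^ q⁻¹.toReal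

/-- Mixed frequency derivatives `∂_ξ^{α₁} ∂_η^{α₂} a(x,ξ,η)` of a bilinear amplitude. -/
def d2 {n : ℕ} (α₁ α₂ : Fin n → ℕ) (a : En n → En n → En n → ℂ)
    (x ξ η : En n) : ℂ :=
  mderiv α₁ (fun ζ => mderiv α₂ (fun θ => a x ζ θ) η) ξ

/-- Mixed derivatives `∂_x^β ∂_ξ^{α₁} ∂_η^{α₂} a(x,ξ,η)` of a bilinear amplitude. -/
def d3 {n : ℕ} (β α₁ α₂ : Fin n → ℕ) (a : En n → En n → En n → ℂ)
    (x ξ η : En n) : ℂ :=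
  mderiv β (fun y => d2 α₁ α₂ a y ξ η) x

/-- The bilinear product-type rough amplitude class `L^p_Π S^{(m₁,m₂)}_{(ρ₁,ρ₂)}(n,2)`. -/
def LpPiSm2 {n : ℕ} (p : ℝ≥0∞) (m₁ m₂ ρ₁ ρ₂ : ℝ) (a : En n → En n → En n → ℂ) : Prop :=
  (∀ x, ContDiff ℝ (⊤ : ℕ∞) (fun q : En n × En n => a x q.1 q.2)) ∧
  (∀ (α₁ α₂ : Fin n → ℕ) (ξ η : En n),
    AEStronglyMeasurable (fun x => d2 α₁ α₂ a x ξ η) volume) ∧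
  ∀ α₁ α₂ : Fin n → ℕ, ∃ C : ℝ, ∀ ξ η : En n,
    eLpNorm (fun x => d2 α₁ α₂ a x ξ η) p volume ≤
      ENNReal.ofReal (C * jb ξ (m₁ - ρ₁ * (mdeg α₁ : ℝ)) * jb η (m₂ - ρ₂ * (mdeg α₂ : ℝ)))

/-- The bilinear rough amplitude class `L^p S^m_ρ(n,2)`. -/
def LpSm2 {n : ℕ} (p : ℝ≥0∞) (m ρ : ℝ) (a : En n → En n → En n → ℂ) : Prop :=
  (∀ x, ContDiff ℝ (⊤ : ℕ∞) (fun q : En n × En n => a x q.1 q.2)) ∧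
  (∀ (α₁ α₂ : Fin n → ℕ) (ξ η : En n),
    AEStronglyMeasurable (fun x => d2 α₁ α₂ a x ξ η) volume) ∧
  ∀ α₁ α₂ : Fin n → ℕ, ∃ C : ℝ, ∀ ξ η : En n,
    eLpNorm (fun x => d2 α₁ α₂ a x ξ η) p volume ≤
      ENNReal.ofReal (C * (1 + ‖ξ‖ + ‖η‖) ^ (m - ρ * ((mdeg α₁ : ℝ) + (mdeg α₂ : ℝ))))

/-- The bilinear Hörmander class `S^m_{ρ,δ}(n,2)`. -/
def HormS2 {n : ℕ} (m ρ δ : ℝ) (a : En n → En n → En n → ℂ) : Prop :=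
  ContDiff ℝ (⊤ : ℕ∞) (fun q : En n × En n × En n => a q.1 q.2.1 q.2.2) ∧
  ∀ β α₁ α₂ : Fin n → ℕ, ∃ C : ℝ, ∀ x ξ η : En n,
    ‖d3 β α₁ α₂ a x ξ η‖ ≤
      C * (1 + ‖ξ‖ + ‖η‖) ^ (m - ρ * ((mdeg α₁ : ℝ) + (mdeg α₂ : ℝ)) + δ * (mdeg β : ℝ))

/-- The bilinear Fourier integral operator
`T_a(f,g)(x) = ∫∫ a(x,ξ,η) e^{iφ₁(x,ξ)+iφ₂(x,η)} f̂(ξ) ĝ(η) dξ dη`. -/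
def bfio {n : ℕ} (a : En n → En n → En n → ℂ) (φ₁ φ₂ : En n → En n → ℝ)
    (f g : En n → ℂ) (x : En n) : ℂ :=
  ∫ w : En n × En n,
    a x w.1 w.2 * Complex.exp (Complex.I * Complex.ofReal (φ₁ x w.1 + φ₂ x w.2)) *
      ft f w.1 * ft g w.2

/-- Partial derivative of a function of `N` frequency variables in the `i`-th coordinate
of the `j`-th variable. -/
def pdN {n N : ℕ} (j : Fin N) (i : Fin n) (g : (Fin N → En n) → ℂ) :
    (Fin N → En n) → ℂ :=
  fun ξ => fderiv ℝ g ξ (Pi.single j (EuclideanSpace.single i 1))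

/-- Multi-index derivative `∂_{ξ₁}^{A 1} ⋯ ∂_{ξ_N}^{A N}`. -/
def mderivN {n N : ℕ} (A : Fin N → Fin n → ℕ) (g : (Fin N → En n) → ℂ) :
    (Fin N → En n) → ℂ :=
  (List.finRange N).foldr
    (fun j h => (List.finRange n).foldr (fun i h' => (pdN j i)^[A j i] h') h) g

/-- The multilinear product-type rough amplitude class `L^p_Π S^{m⃗}_{ρ⃗}(n,N)`. -/
def LpPiSmN {n N : ℕ} (p : ℝ≥0∞) (m ρ : Fin N → ℝ)
    (a : En n → (Fin N → En n) → ℂ) : Prop :=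
  (∀ x, ContDiff ℝ (⊤ : ℕ∞) (a x)) ∧
  (∀ (A : Fin N → Fin n → ℕ) (ξ : Fin N → En n),
    AEStronglyMeasurable (fun x => mderivN A (a x) ξ) volume) ∧
  ∀ A : Fin N → Fin n → ℕ, ∃ C : ℝ, ∀ ξ : Fin N → En n,
    eLpNorm (fun x => mderivN A (a x) ξ) p volume ≤
      ENNReal.ofReal (C * ∏ j, jb (ξ j) (m j - ρ j * (mdeg (A j) : ℝ)))

/-- The multilinear rough amplitude class `L^p S^m_ρ(n,N)`. -/
def LpSmN {n N : ℕ} (p : ℝ≥0∞) (m ρ : ℝ) (a : En n → (Fin N → En n) → ℂ) : Prop :=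
  (∀ x, ContDiff ℝ (⊤ : ℕ∞) (a x)) ∧
  (∀ (A : Fin N → Fin n → ℕ) (ξ : Fin N → En n),
    AEStronglyMeasurable (fun x => mderivN A (a x) ξ) volume) ∧
  ∀ A : Fin N → Fin n → ℕ, ∃ C : ℝ, ∀ ξ : Fin N → En n,
    eLpNorm (fun x => mderivN A (a x) ξ) p volume ≤
      ENNReal.ofReal (C * (1 + ∑ j, ‖ξ j‖) ^ (m - ρ * ∑ j, (mdeg (A j) : ℝ)))

/-- The multilinear Fourier integral operator. -/
def mfio {n N : ℕ} (a : En n → (Fin N → En n) → ℂ) (φ : Fin N → En n → En n → ℝ)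
    (f : Fin N → En n → ℂ) (x : En n) : ℂ :=
  ∫ ξ : Fin N → En n,
    a x ξ * Complex.exp (Complex.I * Complex.ofReal (∑ j, φ j x (ξ j))) *
      ∏ j, ft (f j) (ξ j)

/-- The Sobolev (Bessel potential) norm `‖f‖_{H^{s,q}} = ‖ℱ^{-1}(⟨ξ⟩^s f̂)‖_{L^q}`. -/
def besselNorm {n : ℕ} (s : ℝ) (q : ℝ≥0∞) (f : En n → ℂ) : ℝ≥0∞ :=
  eLpNorm (fun x : En n =>
    (((2 * Real.pi) ^ n)⁻¹ : ℝ) •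
      ∫ ξ : En n, Complex.ofReal (jb ξ s) * ft f ξ *
        Complex.exp (Complex.I * Complex.ofReal ⟪x, ξ⟫)) q volume


/-- The unnormalised oscillatory integral `∫ e^{i z·ξ} g(ξ) dξ`. -/
def osc {n : ℕ} (g : En n → ℂ) (z : En n) : ℂ :=
  ∫ ξ : En n, Complex.exp (Complex.I * Complex.ofReal ⟪z, ξ⟫) * g ξ

open FourierTransform in
lemma plancherel_aux {n : ℕ} {g : En n → ℂ} (hg : Integrable g volume)
    (hg2 : MemLp g 2 volume) : eLpNorm (𝓕 g) 2 volume = eLpNorm g 2 volume := by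
  set G : Lp ℂ 2 (volume : Measure (En n)) := hg2.toLp g with hG
  have hcont : Continuous (𝓕 g) :=
    VectorFourier.fourierIntegral_continuous Real.continuous_fourierChar
      (by exact continuous_inner) hg
  have key : 𝓕 g =ᵐ[volume] ((𝓕 G : Lp ℂ 2 (volume : Measure (En n))) : En n → ℂ) := by
    apply ae_eq_of_integral_contDiff_smul_eq
    · exact hcont.locallyIntegrable
    · exact (Lp.memLp (𝓕 G)).locallyIntegrable (by norm_num)
    intro φ hφ hφc
    have hφ' : ContDiff ℝ (⊤ : ℕ∞) (fun x => (φ x : ℂ)) :=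
      Complex.ofRealCLM.contDiff.comp hφ
    have hφc' : HasCompactSupport (fun x => (φ x : ℂ)) := hφc.comp_left (g := Complex.ofReal) rfl
    set S : 𝓢(En n, ℂ) := hφc'.toSchwartzMap hφ' with hS
    have hSx : ∀ x, S x = (φ x : ℂ) := fun x => rfl
    have h1 := congrArg (fun T : 𝓢'(En n, ℂ) => T S) (Lp.fourier_toTemperedDistribution_eq G)
    simp only [TemperedDistribution.fourier_apply, Lp.toTemperedDistribution_apply] at h1
    have h2 : ∫ x, (𝓕 S) x • G x = ∫ x, (𝓕 S) x • g x := by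
      apply integral_congr_ae
      filter_upwards [hg2.coeFn_toLp] with x hx
      rw [hx]
    have h3 : ∫ x, (𝓕 (S : En n → ℂ)) x • g x = ∫ x, S x • 𝓕 g x := by
      have := VectorFourier.integral_fourierIntegral_smul_eq_flip (L := innerₗ (En n))
        (μ := volume) (ν := volume) (e := Real.fourierChar) Real.continuous_fourierChar
        (by exact continuous_inner) S.integrable hg
      simpa using! this
    have h4 : ∫ x, φ x • 𝓕 g x = ∫ x, S x • 𝓕 g x := by simp [hSx]
    have h5 : ∫ x, φ x • (𝓕 G : Lp ℂ 2 (volume : Measure (En n))) x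
      = ∫ x, S x • (𝓕 G : Lp ℂ 2 (volume : Measure (En n))) x := by simp [hSx]
    rw [h4, h5, ← h1, h2, ← h3]
    rfl
  rw [eLpNorm_congr_ae key]
  have := Lp.norm_fourier_eq G
  rw [Lp.norm_def, Lp.norm_def, ENNReal.toReal_eq_toReal_iff' (Lp.eLpNorm_ne_top _)
    (Lp.eLpNorm_ne_top _)] at this
  rw [this, hG, eLpNorm_congr_ae hg2.coeFn_toLp]

open FourierTransform in
lemma osc_eq {n : ℕ} (g : En n → ℂ) (z : En n) :
    osc g z = 𝓕 g ((-(2 * Real.pi)⁻¹ : ℝ) • z) := by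
  rw [Real.fourier_eq', osc]
  congr 1
  ext ξ
  rw [smul_eq_mul]
  congr 2
  rw [inner_smul_right, real_inner_comm]
  push_cast
  have : (Real.pi : ℂ) ≠ 0 := by exact_mod_cast Real.pi_ne_zero
  field_simp

lemma osc_continuous {n : ℕ} {g : En n → ℂ} (hg : Integrable g volume) : Continuous (osc g) := by
  have hcont : Continuous (FourierTransform.fourier g : En n → ℂ) :=
    VectorFourier.fourierIntegral_continuous Real.continuous_fourierChar
      (by exact continuous_inner) hg
  have : osc g = fun z => (FourierTransform.fourier g : En n → ℂ)
      ((-(2 * Real.pi)⁻¹ : ℝ) • z) := funext (osc_eq g)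
  rw [this]
  exact hcont.comp (continuous_const_smul _)

lemma osc_L2 (n : ℕ) : ∃ K : ℝ≥0∞, K ≠ ⊤ ∧ ∀ g : En n → ℂ, Integrable g volume →
    MemLp g 2 volume → ∫⁻ z, ‖osc g z‖ₑ ^ (2:ℝ) ≤ K * ∫⁻ ξ, ‖g ξ‖ₑ ^ (2:ℝ) := by
  have hc : (-(2 * Real.pi)⁻¹ : ℝ) ≠ 0 := by
    have := Real.pi_pos
    simp [this.ne']
  refine ⟨ENNReal.ofReal |((-(2 * Real.pi)⁻¹ : ℝ) ^ Module.finrank ℝ (En n))⁻¹|,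
    ENNReal.ofReal_ne_top, fun g hg hg2 => ?_⟩
  have h1 := plancherel_aux hg hg2
  rw [eLpNorm_eq_lintegral_rpow_enorm_toReal (by norm_num) (by norm_num),
    eLpNorm_eq_lintegral_rpow_enorm_toReal (by norm_num) (by norm_num)] at h1
  simp only [ENNReal.toReal_ofNat] at h1
  have h2 := (ENNReal.rpow_left_injective (x := (1/2:ℝ)) (by norm_num)) h1
  rw [← h2]
  simp_rw [osc_eq]
  have hcont : Continuous (FourierTransform.fourier g : En n → ℂ) :=
    VectorFourier.fourierIntegral_continuous Real.continuous_fourierChar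
      (by exact continuous_inner) hg
  have := Measure.map_addHaar_smul (volume : Measure (En n)) hc
  have hm : Measurable (fun z : En n => ‖(FourierTransform.fourier g : En n → ℂ) z‖ₑ ^ (2:ℝ)) :=
    (hcont.measurable.enorm).pow_const _
  have h3 := lintegral_map (μ := volume) hm (measurable_const_smul (-(2 * Real.pi)⁻¹ : ℝ))
  rw [← h3]
  have h4 : Measure.map (fun z : En n => (-(2 * Real.pi)⁻¹ : ℝ) • z) volume =
    ENNReal.ofReal |((-(2 * Real.pi)⁻¹ : ℝ) ^ Module.finrank ℝ (En n))⁻¹| • volume := this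
  rw [h4, lintegral_smul_measure, smul_eq_mul]

lemma osc_Linf {n : ℕ} (g : En n → ℂ) (z : En n) : ‖osc g z‖ₑ ≤ ∫⁻ ξ, ‖g ξ‖ₑ := by
  refine (enorm_integral_le_lintegral_enorm _).trans (le_of_eq ?_)
  congr 1; ext ξ
  rw [enorm_mul]
  have : ‖Complex.exp (Complex.I * Complex.ofReal ⟪z, ξ⟫)‖ₑ = 1 := by
    rw [← ofReal_norm, mul_comm, Complex.norm_exp_ofReal_mul_I]; simp
  rw [this, one_mul]

lemma osc_integrable {n : ℕ} {g : En n → ℂ} (hg : Integrable g volume) (z : En n) :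
    Integrable (fun ξ : En n => Complex.exp (Complex.I * Complex.ofReal ⟪z, ξ⟫) * g ξ) := by
  refine hg.bdd_mul (c := 1) ?_ ?_
  · exact (by fun_prop : Continuous _).aestronglyMeasurable
  · filter_upwards with ξ
    rw [mul_comm, Complex.norm_exp_ofReal_mul_I]

lemma osc_add {n : ℕ} {g h : En n → ℂ} (hg : Integrable g volume) (hh : Integrable h volume)
    (z : En n) : osc (fun ξ => g ξ + h ξ) z = osc g z + osc h z := by
  unfold osc
  rw [← integral_add (osc_integrable hg z) (osc_integrable hh z)]
  congr 1; ext ξ; ring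

lemma hy_tail {n : ℕ} {K2 : ℝ≥0∞}
    (hK : ∀ g : En n → ℂ, Integrable g volume →
      MemLp g 2 volume → ∫⁻ z, ‖osc g z‖ₑ ^ (2:ℝ) ≤ K2 * ∫⁻ ξ, ‖g ξ‖ₑ ^ (2:ℝ))
    {s : ℝ} (hs1 : 1 < s)
    {g : En n → ℂ} (hg : Integrable g volume) (hgm : Measurable g) {S : ℝ} (hS : 0 < S)
    (hSg : ∫⁻ ξ, ‖g ξ‖ₑ ^ s = ENNReal.ofReal S) {t : ℝ} (ht : 0 < t) :
    volume {z | t < ‖osc g z‖} ≤ 4 * K2 * ENNReal.ofReal (t ^ (-2 : ℝ)) *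
      ∫⁻ ξ, (if ‖g ξ‖ ≤ (2 * S / t) ^ (s - 1)⁻¹ then ‖g ξ‖ₑ ^ (2:ℝ) else 0) := by
  set h : ℝ := (2 * S / t) ^ (s - 1)⁻¹ with hh
  have hs0 : 0 < s - 1 := by linarith
  have hpos : 0 < h := by positivity
  set E : Set (En n) := {ξ | ‖g ξ‖ ≤ h} with hE
  have hEm : MeasurableSet E := measurableSet_le hgm.norm measurable_const
  have hlow : Integrable (E.indicator g) volume := hg.indicator hEm
  have hhigh : Integrable (Eᶜ.indicator g) volume := hg.indicator hEm.compl
  have hlow2 : MemLp (E.indicator g) 2 volume := by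
    have h1 : MemLp (E.indicator g) 1 volume := memLp_one_iff_integrable.2 hlow
    have h2 : MemLp (E.indicator g) ⊤ volume := by
      refine memLp_top_of_bound hlow.1 h ?_
      filter_upwards with ξ
      by_cases hξ : ξ ∈ E
      · rw [Set.indicator_of_mem hξ]; exact hξ
      · rw [Set.indicator_of_notMem hξ]; simpa using hpos.le
    refine ⟨hlow.1, ?_⟩
    rw [eLpNorm_lt_top_iff_lintegral_rpow_enorm_lt_top (by norm_num) (by norm_num)]
    calc ∫⁻ ξ, ‖E.indicator g ξ‖ₑ ^ (2:ℝ≥0∞).toReal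
        ≤ ∫⁻ ξ, ENNReal.ofReal h * ‖E.indicator g ξ‖ₑ := by
          apply lintegral_mono
          intro ξ
          simp only [ENNReal.toReal_ofNat, ENNReal.rpow_two, sq]
          gcongr
          rw [← ofReal_norm]
          apply ENNReal.ofReal_le_ofReal
          by_cases hξ : ξ ∈ E
          · rw [Set.indicator_of_mem hξ]; exact hξ
          · rw [Set.indicator_of_notMem hξ]; simpa using hpos.le
      _ < ⊤ := by
          rw [lintegral_const_mul' _ _ ENNReal.ofReal_ne_top]
          exact ENNReal.mul_lt_top ENNReal.ofReal_lt_top hlow.2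
  have hsum : ∀ z, osc g z = osc (E.indicator g) z + osc (Eᶜ.indicator g) z := by
    intro z
    rw [← osc_add hlow hhigh]
    congr 1
    ext ξ
    exact (Set.indicator_self_add_compl_apply E g ξ).symm
  have hhb : ∀ z, ‖osc (Eᶜ.indicator g) z‖ₑ ≤ ENNReal.ofReal (t / 2) := by
    intro z
    refine (osc_Linf _ z).trans ?_
    calc ∫⁻ ξ, ‖Eᶜ.indicator g ξ‖ₑ ≤ ∫⁻ ξ, ‖g ξ‖ₑ ^ s * ENNReal.ofReal (t / (2 * S)) := by
          apply lintegral_mono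
          intro ξ
          dsimp only
          by_cases hξ : ξ ∈ E
          · rw [Set.indicator_of_notMem (by simpa using hξ)]; simp
          · rw [Set.indicator_of_mem (by simpa using hξ)]
            have hξ' : h < ‖g ξ‖ := not_le.1 hξ
            have hgp : 0 < ‖g ξ‖ := hpos.trans hξ'
            simp only [← ofReal_norm]
            rw [ENNReal.ofReal_rpow_of_pos hgp, ← ENNReal.ofReal_mul (by positivity)]
            apply ENNReal.ofReal_le_ofReal
            have h1 : 2 * S / t ≤ ‖g ξ‖ ^ (s - 1) := by
              have := Real.rpow_le_rpow hpos.le hξ'.le hs0.le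
              rwa [hh, ← Real.rpow_mul (by positivity), inv_mul_cancel₀ hs0.ne', Real.rpow_one]
                at this
            have h2 : ‖g ξ‖ ^ s = ‖g ξ‖ * ‖g ξ‖ ^ (s - 1) := by
              rw [← Real.rpow_one_add' hgp.le (by linarith)]; congr 1; ring
            rw [h2, mul_assoc]
            apply le_mul_of_one_le_right hgp.le
            have h3 : (2 * S / t) * (t / (2 * S)) = 1 := by field_simp
            exact h3.symm.le.trans (mul_le_mul_of_nonneg_right h1 (by positivity))
      _ = ENNReal.ofReal (t / 2) := by
          rw [lintegral_mul_const' _ _ ENNReal.ofReal_ne_top, hSg, ← ENNReal.ofReal_mul hS.le]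
          congr 1; field_simp
  have hsub : {z | t < ‖osc g z‖} ⊆
      {z | ENNReal.ofReal (t / 2) ^ (2:ℝ) ≤ ‖osc (E.indicator g) z‖ₑ ^ (2:ℝ)} := by
    intro z hz
    have hz' : t < ‖osc g z‖ := hz
    have h1 : ‖osc (Eᶜ.indicator g) z‖ ≤ t / 2 := by
      have := hhb z
      rw [← ofReal_norm] at this
      exact (ENNReal.ofReal_le_ofReal_iff (by positivity)).1 this
    have h2 : t / 2 ≤ ‖osc (E.indicator g) z‖ := by
      rw [hsum z] at hz'
      have := norm_add_le (osc (E.indicator g) z) (osc (Eᶜ.indicator g) z)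
      linarith
    rw [Set.mem_ofPred_eq]
    rw [← ofReal_norm]
    gcongr
  have hne : ENNReal.ofReal (t / 2) ^ (2:ℝ) ≠ 0 := by simp [ht]
  have hnt : ENNReal.ofReal (t / 2) ^ (2:ℝ) ≠ ⊤ := by simp
  have hcont := osc_continuous hlow
  have hcheb := mul_meas_ge_le_lintegral₀ (μ := volume)
    (f := fun z => ‖osc (E.indicator g) z‖ₑ ^ (2:ℝ))
    (hcont.measurable.enorm.pow_const _).aemeasurable (ENNReal.ofReal (t / 2) ^ (2:ℝ))
  have hI : ∫⁻ ξ, ‖E.indicator g ξ‖ₑ ^ (2:ℝ) =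
      ∫⁻ ξ, (if ‖g ξ‖ ≤ h then ‖g ξ‖ₑ ^ (2:ℝ) else 0) := by
    congr 1; ext ξ
    by_cases hξ : ξ ∈ E
    · rw [Set.indicator_of_mem hξ, if_pos (show ‖g ξ‖ ≤ h from hξ)]
    · rw [Set.indicator_of_notMem hξ, if_neg (show ¬ ‖g ξ‖ ≤ h from hξ)]; simp
  have hfin := hcheb.trans (hK _ hlow hlow2)
  rw [hI] at hfin
  have hc : 4 * ENNReal.ofReal (t ^ (-2:ℝ)) * ENNReal.ofReal (t / 2) ^ (2:ℝ) = 1 := by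
    rw [ENNReal.ofReal_rpow_of_pos (by positivity), show (4:ℝ≥0∞) = ENNReal.ofReal 4 by simp,
      ← ENNReal.ofReal_mul (by norm_num), ← ENNReal.ofReal_mul (by positivity)]
    rw [Real.rpow_neg ht.le, Real.rpow_two, Real.rpow_two]
    rw [show (4 * (t ^ 2)⁻¹ * (t / 2) ^ 2 : ℝ) = 1 by field_simp; norm_num]
    simp
  calc volume {z | t < ‖osc g z‖}
      ≤ volume {z | ENNReal.ofReal (t / 2) ^ (2:ℝ) ≤ ‖osc (E.indicator g) z‖ₑ ^ (2:ℝ)} :=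
        measure_mono hsub
    _ = 4 * ENNReal.ofReal (t ^ (-2:ℝ)) * (ENNReal.ofReal (t / 2) ^ (2:ℝ) *
          volume {z | ENNReal.ofReal (t / 2) ^ (2:ℝ) ≤ ‖osc (E.indicator g) z‖ₑ ^ (2:ℝ)}) := by
        rw [← mul_assoc, hc, one_mul]
    _ ≤ 4 * ENNReal.ofReal (t ^ (-2:ℝ)) * (K2 *
          ∫⁻ ξ, (if ‖g ξ‖ ≤ h then ‖g ξ‖ₑ ^ (2:ℝ) else 0)) := by gcongr
    _ = _ := by ring

lemma hy_inner {s s' : ℝ} (hs1 : 1 < s) (hs2 : s < 2) (hs' : s' = s / (s - 1))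
    {S : ℝ} (hS : 0 < S) (y : ℝ) (hy : 0 ≤ y) :
    ∫⁻ t in Set.Ioi (0:ℝ), (if y ≤ (2 * S / t) ^ (s - 1)⁻¹ then
      ENNReal.ofReal (y ^ (2:ℝ)) * ENNReal.ofReal (t ^ (s' - 3)) else 0) ≤
    ENNReal.ofReal ((2 * S) ^ (s' - 2) / (s' - 2)) * ENNReal.ofReal (y ^ s) := by
  have hs0 : 0 < s - 1 := by linarith
  have hs'2 : 0 < s' - 2 := by
    rw [hs', sub_pos, lt_div_iff₀ hs0]; linarith
  rcases hy.eq_or_lt with rfl | hy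
  · simp
  set T : ℝ := 2 * S / y ^ (s - 1) with hT
  have hTpos : 0 < T := by positivity
  calc _ ≤ ∫⁻ t in Set.Ioi (0:ℝ), (Set.Ioc 0 T).indicator (fun t =>
            ENNReal.ofReal (y ^ (2:ℝ)) * ENNReal.ofReal (t ^ (s' - 3))) t := by
          apply setLIntegral_mono' measurableSet_Ioi
          intro t ht
          have ht : 0 < t := ht
          split_ifs with hc
          · have : t ∈ Set.Ioc 0 T := by
              refine ⟨ht, ?_⟩
              have h1 := Real.rpow_le_rpow hy.le hc hs0.le
              rw [← Real.rpow_mul (by positivity), inv_mul_cancel₀ hs0.ne', Real.rpow_one,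
                le_div_iff₀ ht] at h1
              rw [hT, le_div_iff₀ (by positivity)]
              linarith
            rw [Set.indicator_of_mem this]
          · exact zero_le
    _ ≤ ∫⁻ t in Set.Ioc 0 T, ENNReal.ofReal (y ^ (2:ℝ)) * ENNReal.ofReal (t ^ (s' - 3)) := by
          rw [← lintegral_indicator measurableSet_Ioc]
          exact setLIntegral_le_lintegral _ _
    _ = ENNReal.ofReal (y ^ (2:ℝ)) * ENNReal.ofReal (T ^ (s' - 2) / (s' - 2)) := by
          rw [lintegral_const_mul' _ _ ENNReal.ofReal_ne_top]
          congr 1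
          have hInt0 : IntervalIntegrable (fun t : ℝ => t ^ (s' - 3)) volume 0 T :=
            intervalIntegral.intervalIntegrable_rpow' (by linarith)
          rw [← ofReal_integral_eq_lintegral_ofReal hInt0.1]
          · rw [← intervalIntegral.integral_of_le hTpos.le,
              integral_rpow (Or.inl (by linarith))]
            rw [show s' - 3 + 1 = s' - 2 by ring, Real.zero_rpow hs'2.ne', sub_zero]
          · rw [Filter.EventuallyLE, ae_restrict_iff' measurableSet_Ioc]
            filter_upwards with t ht
            exact Real.rpow_nonneg ht.1.le _
    _ = _ := by
          rw [← ENNReal.ofReal_mul (by positivity), ← ENNReal.ofReal_mul (by positivity)]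
          congr 1
          have h1 : y ^ (2:ℝ) / (y ^ (s - 1)) ^ (s' - 2) = y ^ s := by
            rw [← Real.rpow_mul hy.le, ← Real.rpow_sub hy]
            congr 1
            rw [hs']; field_simp; ring
          rw [hT, Real.div_rpow (by positivity) (by positivity), ← h1]
          field_simp

lemma hy_mid_meas (n : ℕ) {s s' : ℝ} (hs1 : 1 < s) (hs2 : s < 2) (hs' : s' = s / (s - 1)) :
    ∃ K : ℝ≥0∞, K ≠ ⊤ ∧ ∀ g : En n → ℂ, Integrable g volume → Measurable g →
      ∫⁻ z, ‖osc g z‖ₑ ^ s' ≤ K * (∫⁻ ξ, ‖g ξ‖ₑ ^ s) ^ (s' - 1) := by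
  have hs0 : 0 < s - 1 := by linarith
  have hs'2 : 0 < s' - 2 := by
    rw [hs', sub_pos, lt_div_iff₀ hs0]; linarith
  obtain ⟨K2, hK2, hK⟩ := osc_L2 n
  refine ⟨ENNReal.ofReal s' * (4 * K2 * ENNReal.ofReal (2 ^ (s' - 2) / (s' - 2))) + 1, ?_, ?_⟩
  · exact ENNReal.add_ne_top.2 ⟨ENNReal.mul_ne_top ENNReal.ofReal_ne_top
      (ENNReal.mul_ne_top (ENNReal.mul_ne_top (by norm_num) hK2) ENNReal.ofReal_ne_top),
      ENNReal.one_ne_top⟩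
  intro g hg hgm
  by_cases htop : ∫⁻ ξ, ‖g ξ‖ₑ ^ s = ⊤
  · rw [htop, ENNReal.top_rpow_of_pos (by linarith), ENNReal.mul_top (by simp)]
    exact le_top
  by_cases hzero : ∫⁻ ξ, ‖g ξ‖ₑ ^ s = 0
  · rw [lintegral_eq_zero_iff (hgm.enorm.pow_const _)] at hzero
    have hg0 : ∀ z, osc g z = 0 := by
      intro z
      apply integral_eq_zero_of_ae
      filter_upwards [hzero] with ξ hξ
      have : g ξ = 0 := by
        have h := (ENNReal.rpow_eq_zero_iff_of_pos (by linarith : (0:ℝ) < s)).1 hξ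
        simpa using h
      simp [this]
    simp [hg0, show 0 < s' by linarith]
  set S := (∫⁻ ξ, ‖g ξ‖ₑ ^ s).toReal with hSdef
  have hS : 0 < S := ENNReal.toReal_pos hzero htop
  have hSg : ∫⁻ ξ, ‖g ξ‖ₑ ^ s = ENNReal.ofReal S := (ENNReal.ofReal_toReal htop).symm
  have hcont := osc_continuous hg
  have hlc := lintegral_rpow_eq_lintegral_meas_lt_mul (volume : Measure (En n))
    (f := fun z => ‖osc g z‖) (Filter.Eventually.of_forall fun z => norm_nonneg _)
    hcont.norm.aemeasurable (p := s') (by linarith)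
  have hL : ∫⁻ z, ‖osc g z‖ₑ ^ s' = ∫⁻ z, ENNReal.ofReal (‖osc g z‖ ^ s') := by
    congr 1; ext z
    rw [← ofReal_norm, ENNReal.ofReal_rpow_of_nonneg (norm_nonneg _) (by linarith)]
  rw [hL, hlc]
  have hmeas : Measurable (Function.uncurry fun (t : ℝ) (ξ : En n) =>
      (if ‖g ξ‖ ≤ (2 * S / t) ^ (s - 1)⁻¹ then
      ENNReal.ofReal (‖g ξ‖ ^ (2:ℝ)) * ENNReal.ofReal (t ^ (s' - 3)) else 0)) := by
    apply Measurable.ite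
    · apply measurableSet_le
      · exact (hgm.comp measurable_snd).norm
      · exact (measurable_const.div measurable_fst).pow_const _
    · apply Measurable.fun_mul
      · exact ((hgm.comp measurable_snd).norm.pow_const _).ennreal_ofReal
      · exact (measurable_fst.pow_const _).ennreal_ofReal
    · exact measurable_const
  have hb : ∫⁻ t in Set.Ioi (0:ℝ), volume {z | t < ‖osc g z‖} * ENNReal.ofReal (t ^ (s' - 1)) ≤
      4 * K2 * (ENNReal.ofReal ((2 * S) ^ (s' - 2) / (s' - 2)) * ENNReal.ofReal S) := by
    calc _ ≤ ∫⁻ t in Set.Ioi (0:ℝ), 4 * K2 * ∫⁻ ξ, (if ‖g ξ‖ ≤ (2 * S / t) ^ (s - 1)⁻¹ then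
              ENNReal.ofReal (‖g ξ‖ ^ (2:ℝ)) * ENNReal.ofReal (t ^ (s' - 3)) else 0) := by
            apply setLIntegral_mono' measurableSet_Ioi
            intro t ht
            have ht : 0 < t := ht
            refine (mul_le_mul_left (hy_tail hK hs1 hg hgm hS hSg ht) _).trans (le_of_eq ?_)
            have e1 : ENNReal.ofReal (t ^ (s' - 3)) =
                ENNReal.ofReal (t ^ (-2:ℝ)) * ENNReal.ofReal (t ^ (s' - 1)) := by
              rw [← ENNReal.ofReal_mul (by positivity), ← Real.rpow_add ht]
              congr 2; ring
            have e2 : ∀ ξ, (if ‖g ξ‖ ≤ (2 * S / t) ^ (s - 1)⁻¹ then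
              ENNReal.ofReal (‖g ξ‖ ^ (2:ℝ)) * ENNReal.ofReal (t ^ (s' - 3)) else 0) =
              (if ‖g ξ‖ ≤ (2 * S / t) ^ (s - 1)⁻¹ then ‖g ξ‖ₑ ^ (2:ℝ) else 0) *
                ENNReal.ofReal (t ^ (s' - 3)) := by
              intro ξ
              rw [← ofReal_norm, ENNReal.ofReal_rpow_of_nonneg (norm_nonneg _) (by norm_num)]
              split_ifs <;> simp
            simp_rw [e2]
            rw [lintegral_mul_const' _ _ ENNReal.ofReal_ne_top, e1]
            ring
      _ = 4 * K2 * ∫⁻ ξ, ∫⁻ t in Set.Ioi (0:ℝ), (if ‖g ξ‖ ≤ (2 * S / t) ^ (s - 1)⁻¹ then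
              ENNReal.ofReal (‖g ξ‖ ^ (2:ℝ)) * ENNReal.ofReal (t ^ (s' - 3)) else 0) := by
            rw [lintegral_const_mul' _ _ (ENNReal.mul_ne_top (by norm_num) hK2)]
            rw [lintegral_lintegral_swap hmeas.aemeasurable]
      _ ≤ 4 * K2 * ∫⁻ ξ, ENNReal.ofReal ((2 * S) ^ (s' - 2) / (s' - 2)) *
            ENNReal.ofReal (‖g ξ‖ ^ s) := by
            gcongr with ξ
            exact hy_inner hs1 hs2 hs' hS _ (norm_nonneg _)
      _ = _ := by
            rw [lintegral_const_mul' _ _ ENNReal.ofReal_ne_top, ← hSg]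
            congr 3
            ext ξ
            rw [← ofReal_norm, ENNReal.ofReal_rpow_of_nonneg (norm_nonneg _) (by linarith)]
  calc _ ≤ ENNReal.ofReal s' *
        (4 * K2 * (ENNReal.ofReal ((2 * S) ^ (s' - 2) / (s' - 2)) * ENNReal.ofReal S)) := by
        gcongr
    _ = ENNReal.ofReal s' * (4 * K2 * ENNReal.ofReal (2 ^ (s' - 2) / (s' - 2))) *
        (ENNReal.ofReal S) ^ (s' - 1) := by
        rw [ENNReal.ofReal_rpow_of_pos hS]
        have : ENNReal.ofReal ((2 * S) ^ (s' - 2) / (s' - 2)) * ENNReal.ofReal S =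
          ENNReal.ofReal (2 ^ (s' - 2) / (s' - 2)) * ENNReal.ofReal (S ^ (s' - 1)) := by
          rw [← ENNReal.ofReal_mul (by positivity), ← ENNReal.ofReal_mul (by positivity)]
          congr 1
          rw [Real.mul_rpow (by norm_num) hS.le, show s' - 1 = (s' - 2) + 1 by ring,
            Real.rpow_add_one hS.ne']
          ring
        rw [this]; ring
    _ ≤ _ := by
        rw [hSg]
        gcongr
        exact le_self_add

/-- Hausdorff--Young inequality. -/
lemma hausdorff_young (n : ℕ) (s s' : ℝ≥0∞) (h1 : 1 ≤ s) (h2 : s ≤ 2)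
    (hss : s⁻¹ + s'⁻¹ = 1) :
    ∃ K : ℝ≥0∞, K ≠ ⊤ ∧ ∀ g : En n → ℂ, Integrable g volume →
      eLpNorm (osc g) s' volume ≤ K * eLpNorm g s volume := by
  have hst : s ≠ ⊤ := ne_top_of_le_ne_top (by norm_num) h2
  have hs0 : s ≠ 0 := (zero_lt_one.trans_le h1).ne'
  rcases h1.eq_or_lt with rfl | h1'
  · have : s' = ⊤ := by
      rw [inv_one] at hss
      have h3 : s'⁻¹ = 0 := by
        have : (1:ℝ≥0∞) + s'⁻¹ = 1 + 0 := by simpa using hss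
        exact (ENNReal.add_right_inj ENNReal.one_ne_top).1 this
      simpa using h3
    subst this
    refine ⟨1, ENNReal.one_ne_top, fun g hg => ?_⟩
    rw [one_mul, eLpNorm_one_eq_lintegral_enorm, eLpNorm_exponent_top]
    exact essSup_le_of_ae_le _ (Filter.Eventually.of_forall (osc_Linf g))
  have hs't : s' ≠ ⊤ := by
    rintro rfl
    simp only [ENNReal.inv_top, add_zero] at hss
    rw [ENNReal.inv_eq_one] at hss
    exact h1'.ne' hss
  have hs'0 : s' ≠ 0 := by
    rintro rfl
    simp at hss
  have hr1 : 1 < s.toReal := by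
    rw [← ENNReal.toReal_one]; exact (ENNReal.toReal_lt_toReal ENNReal.one_ne_top hst).2 h1'
  have hrr : s.toReal⁻¹ + s'.toReal⁻¹ = 1 := by
    rw [← ENNReal.toReal_inv, ← ENNReal.toReal_inv, ← ENNReal.toReal_add (by simp [hs0])
      (by simp [hs'0]), hss, ENNReal.toReal_one]
  have hr' : s'.toReal = s.toReal / (s.toReal - 1) := by
    have hp : 0 < s'.toReal := ENNReal.toReal_pos hs'0 hs't
    have : s.toReal - 1 ≠ 0 := by linarith
    field_simp at hrr ⊢
    linarith
  rcases h2.eq_or_lt with rfl | h2'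
  · obtain ⟨K2, hK2, hK⟩ := osc_L2 n
    simp only [ENNReal.toReal_ofNat] at hr'
    norm_num at hr'
    have : s' = 2 := by
      rw [← ENNReal.ofReal_toReal hs't, hr']; simp
    subst this
    refine ⟨K2 ^ (1/2:ℝ) + 1, ENNReal.add_ne_top.2 ⟨ENNReal.rpow_ne_top_of_nonneg
      (by norm_num) hK2, ENNReal.one_ne_top⟩, fun g hg => ?_⟩
    by_cases hg2 : MemLp g 2 volume
    · have := hK g hg hg2
      rw [eLpNorm_eq_lintegral_rpow_enorm_toReal (by norm_num) (by norm_num),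
        eLpNorm_eq_lintegral_rpow_enorm_toReal (by norm_num) (by norm_num)]
      simp only [ENNReal.toReal_ofNat]
      calc _ ≤ (K2 * ∫⁻ ξ, ‖g ξ‖ₑ ^ (2:ℝ)) ^ (1/2:ℝ) := by gcongr
        _ = K2 ^ (1/2:ℝ) * (∫⁻ ξ, ‖g ξ‖ₑ ^ (2:ℝ)) ^ (1/2:ℝ) :=
            ENNReal.mul_rpow_of_nonneg _ _ (by norm_num)
        _ ≤ _ := by gcongr; exact le_self_add
    · have : eLpNorm g 2 volume = ⊤ := by
        by_contra h
        exact hg2 ⟨hg.1, lt_top_iff_ne_top.2 h⟩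
      rw [this, ENNReal.mul_top (by simp)]
      exact le_top
  have hr2 : s.toReal < 2 := by
    have := (ENNReal.toReal_lt_toReal hst (by norm_num)).2 h2'
    simpa using this
  obtain ⟨K, hKt, hK⟩ := hy_mid_meas n hr1 hr2 hr'
  have hp' : 0 < s'.toReal := ENNReal.toReal_pos hs'0 hs't
  refine ⟨K ^ (1 / s'.toReal), ENNReal.rpow_ne_top_of_nonneg (by positivity) hKt, fun g hg => ?_⟩
  set g' := hg.1.mk g with hg'
  have hae : g =ᵐ[volume] g' := hg.1.ae_eq_mk
  have hosc : osc g = osc g' := by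
    ext z
    apply integral_congr_ae
    filter_upwards [hae] with ξ hξ
    rw [hξ]
  have h3 := hK g' (hg.congr hae) hg.1.stronglyMeasurable_mk.measurable
  rw [hosc, eLpNorm_congr_ae hae, eLpNorm_eq_lintegral_rpow_enorm_toReal hs'0 hs't,
        eLpNorm_eq_lintegral_rpow_enorm_toReal hs0 hst]
  calc _ ≤ (K * (∫⁻ ξ, ‖g' ξ‖ₑ ^ s.toReal) ^ (s'.toReal - 1)) ^ (1 / s'.toReal) := by gcongr
    _ = _ := by
      rw [ENNReal.mul_rpow_of_nonneg _ _ (by positivity), ← ENNReal.rpow_mul]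
      congr 2
      field_simp at hrr ⊢
      linarith

lemma mink {X Y : Type*} [MeasurableSpace X] [MeasurableSpace Y] (μ : Measure X) [SFinite μ]
    (ν : Measure Y) [IsFiniteMeasure ν] (F : X → Y → ℝ≥0∞)
    (hF : Measurable (Function.uncurry F)) {s p : ℝ≥0∞} (hs0 : s ≠ 0) (hst : s ≠ ⊤) (hsp : s ≤ p)
    (M : ℝ≥0∞) (hM : ∀ᵐ y ∂ν, eLpNorm (fun x => F x y) p μ ≤ M) :
    AEMeasurable (fun x => eLpNorm (F x) s ν) μ ∧
    eLpNorm (fun x => eLpNorm (F x) s ν) p μ ≤ ν Set.univ ^ s⁻¹.toReal * M := by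
  have hp0 : p ≠ 0 := fun h => hs0 (by simpa [h] using hsp)
  have hFx : ∀ x, Measurable (F x) := fun x => hF.of_uncurry_left
  have hsr : 0 < s.toReal := ENNReal.toReal_pos hs0 hst
  have hmeas : ∀ {t : ℝ≥0∞}, t ≠ 0 → t ≠ ⊤ → Measurable (fun x => eLpNorm (F x) t ν) := by
    intro t ht0 htt
    simp_rw [eLpNorm_eq_lintegral_rpow_enorm_toReal ht0 htt, enorm_eq_self]
    apply Measurable.pow_const
    exact (hF.pow_const t.toReal).lintegral_prod_right'
  refine ⟨(hmeas hs0 hst).aemeasurable, ?_⟩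
  by_cases hpt : p = ⊤
  · subst hpt
    have h1 : ∀ᵐ x ∂μ, ∀ᵐ y ∂ν, F x y ≤ M := by
      rw [Measure.ae_ae_comm]
      · filter_upwards [hM] with y hy
        rw [eLpNorm_exponent_top] at hy
        filter_upwards [ae_le_eLpNormEssSup (f := fun x => F x y) (μ := μ)] with x hx
        rw [enorm_eq_self] at hx
        exact hx.trans hy
      · exact measurableSet_le hF measurable_const
    rw [eLpNorm_exponent_top]
    refine essSup_le_of_ae_le _ ?_
    filter_upwards [h1] with x hx
    rw [enorm_eq_self, eLpNorm_eq_lintegral_rpow_enorm_toReal hs0 hst]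
    calc (∫⁻ y, ‖F x y‖ₑ ^ s.toReal ∂ν) ^ (1 / s.toReal)
        ≤ (∫⁻ y, M ^ s.toReal ∂ν) ^ (1 / s.toReal) := by
          gcongr ?_ ^ _
          apply lintegral_mono_ae
          filter_upwards [hx] with y hy
          rw [enorm_eq_self]
          gcongr
      _ = _ := by
          rw [lintegral_const, ENNReal.mul_rpow_of_nonneg _ _ (by positivity), ← ENNReal.rpow_mul,
            mul_one_div_cancel hsr.ne', ENNReal.rpow_one, mul_comm, ENNReal.toReal_inv, one_div]
  · have hpr : 0 < p.toReal := ENNReal.toReal_pos hp0 hpt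
    have hle : s.toReal ≤ p.toReal := ENNReal.toReal_mono hpt hsp
    set c := ν Set.univ ^ (1 / s.toReal - 1 / p.toReal) with hc
    have hexp : 0 ≤ 1 / s.toReal - 1 / p.toReal := by
      rw [sub_nonneg]; exact one_div_le_one_div_of_le hsr hle
    have h1 : ∀ x, eLpNorm (F x) s ν ≤ c * eLpNorm (F x) p ν := by
      intro x
      rw [mul_comm]
      exact eLpNorm_le_eLpNorm_mul_rpow_measure_univ hsp (hFx x).aestronglyMeasurable
    have hct : c ≠ ⊤ := ENNReal.rpow_ne_top_of_nonneg hexp (measure_ne_top ν _)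
    rw [eLpNorm_eq_lintegral_rpow_enorm_toReal hp0 hpt]
    simp_rw [enorm_eq_self]
    calc (∫⁻ x, eLpNorm (F x) s ν ^ p.toReal ∂μ) ^ (1 / p.toReal)
        ≤ (∫⁻ x, c ^ p.toReal * ∫⁻ y, F x y ^ p.toReal ∂ν ∂μ) ^ (1 / p.toReal) := by
          gcongr ?_ ^ _
          apply lintegral_mono
          intro x
          dsimp only
          refine (ENNReal.rpow_le_rpow (h1 x) hpr.le).trans (le_of_eq ?_)
          rw [ENNReal.mul_rpow_of_nonneg _ _ hpr.le]
          congr 1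
          rw [eLpNorm_eq_lintegral_rpow_enorm_toReal hp0 hpt, ← ENNReal.rpow_mul,
            one_div_mul_cancel hpr.ne', ENNReal.rpow_one]
          simp_rw [enorm_eq_self]
      _ = c * (∫⁻ y, ∫⁻ x, F x y ^ p.toReal ∂μ ∂ν) ^ (1 / p.toReal) := by
          rw [lintegral_const_mul' _ _ (ENNReal.rpow_ne_top_of_nonneg hpr.le hct),
            ENNReal.mul_rpow_of_nonneg _ _ (by positivity), ← ENNReal.rpow_mul,
            mul_one_div_cancel hpr.ne', ENNReal.rpow_one]
          rw [lintegral_lintegral_swap]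
          exact (hF.pow_const _).aemeasurable
      _ ≤ c * (∫⁻ y, M ^ p.toReal ∂ν) ^ (1 / p.toReal) := by
          gcongr c * ?_ ^ _
          apply lintegral_mono_ae
          filter_upwards [hM] with y hy
          rw [eLpNorm_eq_lintegral_rpow_enorm_toReal hp0 hpt] at hy
          simp_rw [enorm_eq_self] at hy
          have := ENNReal.rpow_le_rpow hy hpr.le
          rwa [← ENNReal.rpow_mul, one_div_mul_cancel hpr.ne', ENNReal.rpow_one] at this
      _ = _ := by
          rw [lintegral_const, ENNReal.mul_rpow_of_nonneg _ _ (by positivity), ← ENNReal.rpow_mul,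
            mul_one_div_cancel hpr.ne', ENNReal.rpow_one, mul_comm M, ← mul_assoc, hc,
            ← ENNReal.rpow_add_of_nonneg _ _ hexp (by positivity), sub_add_cancel,
            ENNReal.toReal_inv, one_div]

lemma mink_cont {n : ℕ} (ν : Measure (En n)) [IsFiniteMeasure ν] (b : En n → En n → ℂ)
    (hbc : ∀ x, Continuous (b x))
    (hbm : ∀ ξ, AEStronglyMeasurable (fun x => b x ξ) volume)
    {s p : ℝ≥0∞} (hs0 : s ≠ 0) (hst : s ≠ ⊤) (hsp : s ≤ p)
    (M : ℝ≥0∞) (hM : ∀ᵐ y ∂ν, eLpNorm (fun x => b x y) p volume ≤ M) :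
    AEMeasurable (fun x => eLpNorm (b x) s ν) volume ∧
    eLpNorm (fun x => eLpNorm (b x) s ν) p volume ≤ ν Set.univ ^ s⁻¹.toReal * M := by
  obtain ⟨D, hDc, hDd⟩ := TopologicalSpace.exists_countable_dense (En n)
  have hae : ∀ᵐ x ∂(volume : Measure (En n)), ∀ d ∈ D, b x d = (hbm d).mk _ x := by
    rw [ae_ball_iff hDc]
    intro d _
    exact (hbm d).ae_eq_mk
  set Z := toMeasurable volume {x | ¬ ∀ d ∈ D, b x d = (hbm d).mk _ x} with hZ
  have hZm : MeasurableSet Z := measurableSet_toMeasurable _ _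
  have hZ0 : volume Z = 0 := by rw [hZ, measure_toMeasurable]; exact hae
  have hZn : ∀ x ∉ Z, ∀ d ∈ D, b x d = (hbm d).mk _ x := by
    intro x hx
    by_contra h
    exact hx (subset_toMeasurable _ _ h)
  have hZae : ∀ᵐ x ∂(volume : Measure (En n)), x ∉ Z := measure_eq_zero_iff_ae_notMem.1 hZ0
  set b' : En n → En n → ℂ := fun x ξ => if x ∈ Z then 0 else b x ξ with hb'
  have hb'c : ∀ x, Continuous (b' x) := by
    intro x
    by_cases hx : x ∈ Z
    · simp only [hb', hx, if_true]; exact continuous_const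
    · simp only [hb', hx, if_false]; exact hbc x
  have hb'D : ∀ d ∈ D, Measurable (fun x => b' x d) := by
    intro d hd
    have : (fun x => b' x d) = fun x => if x ∈ Z then 0 else (hbm d).mk _ x := by
      ext x
      by_cases hx : x ∈ Z
      · simp [hb', hx]
      · simp only [hb', hx, if_false]; exact hZn x hx d hd
    rw [this]
    exact Measurable.ite hZm measurable_const (hbm d).stronglyMeasurable_mk.measurable
  have hb'm : ∀ ξ, Measurable (fun x => b' x ξ) := by
    intro ξ
    obtain ⟨u, huD, hu⟩ := mem_closure_iff_seq_limit.1 (hDd ξ)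
    refine measurable_of_tendsto_metrizable (f := fun k x => b' x (u k)) (fun k => hb'D _ (huD k)) ?_
    rw [tendsto_pi_nhds]
    intro x
    exact ((hb'c x).tendsto ξ).comp hu
  have hu : Measurable (Function.uncurry b') :=
    (measurable_uncurry_of_continuous_of_measurable (u := fun ξ x => b' x ξ) hb'c hb'm).comp
      measurable_swap
  have hbb : ∀ᵐ x ∂(volume : Measure (En n)), b x = b' x := by
    filter_upwards [hZae] with x hx
    ext ξ; simp [hb', hx]
  have key := mink volume ν (fun x ξ => ‖b' x ξ‖ₑ) hu.enorm hs0 hst hsp M (by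
    filter_upwards [hM] with y hy
    rw [eLpNorm_enorm]
    refine le_of_eq_of_le (eLpNorm_congr_ae ?_) hy
    filter_upwards [hbb] with x hx
    rw [hx])
  simp_rw [eLpNorm_enorm] at key
  have hE : (fun x => eLpNorm (b x) s ν) =ᵐ[volume] fun x => eLpNorm (b' x) s ν := by
    filter_upwards [hbb] with x hx
    rw [hx]
  exact ⟨key.1.congr hE.symm, (eLpNorm_congr_ae hE).le.trans key.2⟩

lemma pd_contDiff {n : ℕ} {f : En n → ℂ} (i : Fin n) (hf : ContDiff ℝ (⊤ : ℕ∞) f) :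
    ContDiff ℝ (⊤ : ℕ∞) (pd i f) :=
  (hf.fderiv_right (m := (⊤ : ℕ∞)) (by simp)).clm_apply contDiff_const

lemma pd_iter_contDiff {n : ℕ} {f : En n → ℂ} (i : Fin n) (hf : ContDiff ℝ (⊤ : ℕ∞) f) (k : ℕ) :
    ContDiff ℝ (⊤ : ℕ∞) ((pd i)^[k] f) := by
  induction k with
  | zero => exact hf
  | succ k ih => rw [Function.iterate_succ_apply']; exact pd_contDiff i ih

lemma pd_compact {n : ℕ} {f : En n → ℂ} (i : Fin n) (hf : HasCompactSupport f) :
    HasCompactSupport (pd i f) := hf.fderiv_apply ℝ _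

lemma pd_iter_compact {n : ℕ} {f : En n → ℂ} (i : Fin n) (hf : HasCompactSupport f) (k : ℕ) :
    HasCompactSupport ((pd i)^[k] f) := by
  induction k with
  | zero => exact hf
  | succ k ih => rw [Function.iterate_succ_apply']; exact pd_compact i ih

lemma pd_zero_off {n : ℕ} {f : En n → ℂ} (i : Fin n) {S : Set (En n)} (hS : IsClosed S)
    (hf : ∀ ξ, ξ ∉ S → f ξ = 0) : ∀ ξ, ξ ∉ S → pd i f ξ = 0 := by
  intro ξ hξ
  have : f =ᶠ[nhds ξ] fun _ => 0 := by
    filter_upwards [hS.isOpen_compl.mem_nhds hξ] with y hy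
    exact hf y hy
  unfold pd
  rw [this.fderiv_eq]
  simp

lemma pd_iter_zero_off {n : ℕ} {f : En n → ℂ} (i : Fin n) {S : Set (En n)} (hS : IsClosed S)
    (hf : ∀ ξ, ξ ∉ S → f ξ = 0) (k : ℕ) : ∀ ξ, ξ ∉ S → (pd i)^[k] f ξ = 0 := by
  induction k with
  | zero => exact hf
  | succ k ih => rw [Function.iterate_succ_apply']; exact pd_zero_off i hS ih

lemma osc_pd {n : ℕ} {g : En n → ℂ} (i : Fin n) (hg : ContDiff ℝ (⊤ : ℕ∞) g)
    (hc : HasCompactSupport g) (z : En n) :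
    osc (pd i g) z = - (Complex.I * Complex.ofReal (z i)) * osc g z := by
  have hgi : Integrable g volume := hg.continuous.integrable_of_hasCompactSupport hc
  have hgi' : Integrable (pd i g) volume :=
    (pd_contDiff i hg).continuous.integrable_of_hasCompactSupport (pd_compact i hc)
  set e : En n → ℂ := fun ξ => Complex.exp (Complex.I * Complex.ofReal ⟪z, ξ⟫) with he
  have hed : ∀ ξ, HasFDerivAt e
      ((e ξ) • (Complex.I • (Complex.ofRealCLM.comp (innerSL ℝ z)))) ξ := by
    intro ξ
    have h1 : HasFDerivAt (fun ξ : En n => Complex.ofReal ⟪z, ξ⟫)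
      (Complex.ofRealCLM.comp (innerSL ℝ z)) ξ :=
        (Complex.ofRealCLM.comp (innerSL ℝ z)).hasFDerivAt
    exact (h1.const_mul Complex.I).cexp
  have hder : ∀ ξ, fderiv ℝ e ξ (EuclideanSpace.single i 1)
      = (Complex.I * Complex.ofReal (z i)) * e ξ := by
    intro ξ
    rw [(hed ξ).fderiv]
    simp [EuclideanSpace.inner_single_right]
    ring
  have key := integral_mul_fderiv_eq_neg_fderiv_mul_of_integrable (μ := (volume : Measure (En n)))
    (f := e) (g := g) (v := EuclideanSpace.single i 1) (𝕜 := ℂ) ?_ ?_ ?_ ?_ ?_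
  · unfold osc
    rw [show (∫ ξ, e ξ * pd i g ξ) = ∫ ξ, e ξ * fderiv ℝ g ξ (EuclideanSpace.single i 1) from rfl,
      key]
    simp_rw [hder, mul_assoc]
    rw [integral_const_mul, integral_const_mul]
    simp only [mul_assoc, neg_mul]
    rfl
  · simp_rw [hder, mul_assoc]
    exact ((osc_integrable hgi z).const_mul _).const_mul _
  · exact osc_integrable hgi' z
  · exact osc_integrable hgi z
  · exact fun ξ _ => (hed ξ).differentiableAt
  · exact fun ξ _ => hg.differentiable (by simp) ξ

lemma osc_pd_iter {n : ℕ} {g : En n → ℂ} (i : Fin n) (hg : ContDiff ℝ (⊤ : ℕ∞) g)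
    (hc : HasCompactSupport g) (z : En n) (N : ℕ) :
    ‖osc ((pd i)^[N] g) z‖ = |z i| ^ N * ‖osc g z‖ := by
  induction N with
  | zero => simp
  | succ k ih =>
    rw [Function.iterate_succ_apply', osc_pd i (pd_iter_contDiff i hg k) (pd_iter_compact i hc k),
      norm_mul, ih]
    simp
    ring

lemma mderiv_single {n : ℕ} (i : Fin n) (k : ℕ) (f : En n → ℂ) :
    mderiv (Pi.single i k) f = (pd i)^[k] f := by
  unfold mderiv
  have h : ∀ l : List (Fin n), l.Nodup →
      l.foldr (fun j g => (pd j)^[(Pi.single i k : Fin n → ℕ) j] g) f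
        = if i ∈ l then (pd i)^[k] f else f := by
    intro l
    induction l with
    | nil => simp
    | cons j l ih =>
      intro hl
      rw [List.nodup_cons] at hl
      rw [List.foldr_cons, ih hl.2]
      by_cases hij : j = i
      · subst hij
        simp [hl.1]
      · simp [hij, Ne.symm hij]
  rw [h _ (List.nodup_finRange n)]
  simp

lemma mdeg_single {n : ℕ} (i : Fin n) (k : ℕ) : mdeg (Pi.single i k : Fin n → ℕ) = k := by
  simp [mdeg]

lemma pd_mul {n : ℕ} {g h : En n → ℂ} (i : Fin n) (hg : ContDiff ℝ (⊤ : ℕ∞) g)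
    (hh : ContDiff ℝ (⊤ : ℕ∞) h) :
    pd i (fun ξ => g ξ * h ξ) = fun ξ => g ξ * pd i h ξ + pd i g ξ * h ξ := by
  ext ξ
  unfold pd
  rw [fderiv_fun_mul (hg.differentiable (by simp) ξ) (hh.differentiable (by simp) ξ)]
  simp
  ring

lemma pd_iter_mul {n : ℕ} {g h : En n → ℂ} (i : Fin n) (hg : ContDiff ℝ (⊤ : ℕ∞) g)
    (hh : ContDiff ℝ (⊤ : ℕ∞) h) (N : ℕ) :
    (pd i)^[N] (fun ξ => g ξ * h ξ) = fun ξ => ∑ kl ∈ Finset.HasAntidiagonal.antidiagonal N,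
      (N.choose kl.1 : ℂ) * ((pd i)^[kl.1] g ξ * (pd i)^[kl.2] h ξ) := by
  induction N with
  | zero => simp
  | succ N ih =>
    rw [Function.iterate_succ_apply', ih]
    ext ξ
    rw [Finset.sum_antidiagonal_choose_succ_mul (fun k l => (pd i)^[k] g ξ * (pd i)^[l] h ξ)]
    have hd : ∀ k l, DifferentiableAt ℝ (fun ξ => (pd i)^[k] g ξ * (pd i)^[l] h ξ) ξ := by
      intro k l
      exact (((pd_iter_contDiff i hg k).mul (pd_iter_contDiff i hh l)).differentiable (by simp)) ξ
    change fderiv ℝ _ ξ (EuclideanSpace.single i 1) = _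
    rw [fderiv_fun_sum (fun kl _ => (hd kl.1 kl.2).const_mul _)]
    rw [sum_apply, ← Finset.sum_add_distrib]
    refine Finset.sum_congr rfl fun kl hkl => ?_
    rw [fderiv_const_mul (hd kl.1 kl.2)]
    have := congrFun (pd_mul i (pd_iter_contDiff i hg kl.1) (pd_iter_contDiff i hh kl.2)) ξ
    change fderiv ℝ _ ξ (EuclideanSpace.single i 1) = _ at this
    rw [smul_apply, this, Function.iterate_succ_apply',
      Function.iterate_succ_apply', ← Finset.HasAntidiagonal.mem_antidiagonal.1 hkl,
      Nat.choose_symm_of_eq_add (n := kl.1+kl.2) (a := kl.1) (b := kl.2) rfl]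
    rw [smul_eq_mul, mul_add]

lemma pd_scale {n : ℕ} {f : En n → ℂ} (i : Fin n) (hf : ContDiff ℝ (⊤ : ℕ∞) f) (c d : ℝ) :
    pd i (fun ξ => (d : ℂ) * f (c • ξ)) = fun ξ => ((d * c : ℝ) : ℂ) * pd i f (c • ξ) := by
  ext ξ
  have h1 : HasFDerivAt (fun ξ : En n => c • ξ) (c • ContinuousLinearMap.id ℝ (En n)) ξ :=
    (hasFDerivAt_id ξ).const_smul c
  have h2 : HasFDerivAt f (fderiv ℝ f (c • ξ)) (c • ξ) :=
    (hf.differentiable (by simp) _).hasFDerivAt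
  have h3 := (h2.comp ξ h1).const_mul (d : ℂ)
  change fderiv ℝ _ ξ (EuclideanSpace.single i 1) = _
  rw [show (fun ξ => (d : ℂ) * f (c • ξ)) = fun ξ => (d : ℂ) * (f ∘ fun ξ => c • ξ) ξ from rfl,
    h3.fderiv]
  simp [pd]
  ring

lemma pd_iter_scale {n : ℕ} {f : En n → ℂ} (i : Fin n) (hf : ContDiff ℝ (⊤ : ℕ∞) f) (c : ℝ)
    (k : ℕ) :
    (pd i)^[k] (fun ξ => f (c • ξ)) = fun ξ => ((c ^ k : ℝ) : ℂ) * (pd i)^[k] f (c • ξ) := by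
  induction k with
  | zero => simp
  | succ k ih =>
    rw [Function.iterate_succ_apply', ih, pd_scale i (pd_iter_contDiff i hf k),
      Function.iterate_succ_apply', pow_succ]

lemma pd_iter_sub {n : ℕ} {f g : En n → ℂ} (i : Fin n) (hf : ContDiff ℝ (⊤ : ℕ∞) f)
    (hg : ContDiff ℝ (⊤ : ℕ∞) g) (k : ℕ) :
    (pd i)^[k] (fun ξ => f ξ - g ξ) = fun ξ => (pd i)^[k] f ξ - (pd i)^[k] g ξ := by
  induction k with
  | zero => simp
  | succ k ih =>
    rw [Function.iterate_succ_apply', ih, Function.iterate_succ_apply', Function.iterate_succ_apply']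
    ext ξ
    change fderiv ℝ _ ξ (EuclideanSpace.single i 1) = _
    rw [fderiv_fun_sub ((pd_iter_contDiff i hf k).differentiable (by simp) ξ)
      ((pd_iter_contDiff i hg k).differentiable (by simp) ξ)]
    rfl

/-- The dyadic shell. -/
def shell (n j : ℕ) : Set (En n) :=
  {ξ | 2 ^ j / 2 ≤ √(1 + ‖ξ‖ ^ 2) ∧ √(1 + ‖ξ‖ ^ 2) ≤ 4 * 2 ^ j}

lemma shell_closed (n j : ℕ) : IsClosed (shell n j) :=
  (isClosed_le (f := fun _ : En n => (2:ℝ) ^ j / 2) (g := fun ξ => √(1 + ‖ξ‖ ^ 2))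
    (by fun_prop) (by fun_prop)).inter
  (isClosed_le (f := fun ξ : En n => √(1 + ‖ξ‖ ^ 2)) (g := fun _ => 4 * (2:ℝ) ^ j)
    (by fun_prop) (by fun_prop))

lemma shell_subset (n j : ℕ) : shell n j ⊆ Metric.closedBall 0 (4 * 2 ^ j) := by
  rintro ξ ⟨-, h⟩
  rw [mem_closedBall_zero_iff]
  refine le_trans ?_ h
  exact Real.le_sqrt_of_sq_le (by linarith)

lemma shell_volume (n j : ℕ) : volume (shell n j) ≤
    ENNReal.ofReal ((2:ℝ) ^ (j * n)) * volume (Metric.ball (0 : En n) 5) := by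
  calc volume (shell n j) ≤ volume (Metric.ball (0 : En n) (2 ^ j * 5)) := by
        apply measure_mono
        refine (shell_subset n j).trans (Metric.closedBall_subset_ball ?_)
        have : (0:ℝ) < 2 ^ j := by positivity
        linarith
    _ = _ := by
        rw [Measure.addHaar_ball_mul_of_pos _ _ (by positivity)]
        simp [pow_mul]

lemma jb_shell {n j : ℕ} {ξ : En n} (h : ξ ∈ shell n j) (t : ℝ) :
    jb ξ t ≤ 4 ^ |t| * (2:ℝ) ^ (j * t) := by
  obtain ⟨h1, h2⟩ := h
  have hj : jb ξ t = √(1 + ‖ξ‖ ^ 2) ^ t := by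
    unfold jb
    rw [Real.sqrt_eq_rpow, ← Real.rpow_mul (by positivity)]
    ring_nf
  have h2j : (0:ℝ) < 2 ^ j := by positivity
  set u := √(1 + ‖ξ‖ ^ 2) with hu
  have hu0 : 0 < u := lt_of_lt_of_le (by positivity) h1
  rw [hj, show (2:ℝ) ^ (j * t) = (2 ^ j) ^ t by
    rw [Real.rpow_mul (by norm_num), Real.rpow_natCast]]
  have hq : u ^ t = (u / 2 ^ j) ^ t * (2 ^ j) ^ t := by
    rw [← Real.mul_rpow (by positivity) (by positivity), div_mul_cancel₀ _ h2j.ne']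
  rw [hq]
  gcongr
  rcases le_total 0 t with ht | ht
  · rw [abs_of_nonneg ht]
    apply Real.rpow_le_rpow (by positivity) _ ht
    rw [div_le_iff₀ h2j]; exact h2
  · rw [abs_of_nonpos ht, ← neg_neg t, Real.rpow_neg (by positivity), neg_neg,
      ← Real.inv_rpow (by positivity)]
    apply Real.rpow_le_rpow (by positivity) _ (by linarith)
    rw [inv_div, div_le_iff₀ hu0]
    linarith

lemma exists_cutoff (n : ℕ) : ∃ ψ : ℕ → En n → ℂ, (∀ j, ContDiff ℝ (⊤ : ℕ∞) (ψ j)) ∧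
    (∀ j ξ, ξ ∉ shell n j → ψ j ξ = 0) ∧
    (∀ k : ℕ, ∃ C : ℝ, 0 ≤ C ∧ ∀ j i ξ, ‖(pd i)^[k] (ψ j) ξ‖ ≤ C * ((2 ^ j)⁻¹) ^ k) ∧
    (∀ j ξ, ‖ψ j ξ‖ ≤ 1) ∧
    (∀ J ξ, ‖∑ j ∈ Finset.range J, ψ j ξ‖ ≤ 1) ∧
    ∀ ξ, Filter.Tendsto (fun J => ∑ j ∈ Finset.range J, ψ j ξ) Filter.atTop (nhds 1) := by
  let b : ContDiffBump (0 : En n) := ⟨1, 2, by norm_num, by norm_num⟩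
  set φ : En n → ℂ := fun ξ => (b ξ : ℂ) with hφ
  have hφs : ContDiff ℝ (⊤ : ℕ∞) φ := Complex.ofRealCLM.contDiff.comp b.contDiff
  have hφc : HasCompactSupport φ := b.hasCompactSupport.comp_left (g := Complex.ofReal) rfl
  have hφ1 : ∀ ξ, ‖ξ‖ ≤ 1 → φ ξ = 1 := by
    intro ξ h
    simp only [hφ]
    rw [b.one_of_mem_closedBall (by simpa [b] using h)]; simp
  have hφ0 : ∀ ξ, 2 ≤ ‖ξ‖ → φ ξ = 0 := by
    intro ξ h
    simp only [hφ]
    rw [b.zero_of_le_dist (by simpa [b] using h)]; simp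
  set Φ : ℕ → En n → ℂ := fun j ξ => φ (((2:ℝ) ^ j)⁻¹ • ξ) with hΦ
  have hΦs : ∀ j, ContDiff ℝ (⊤ : ℕ∞) (Φ j) := fun j => hφs.comp (contDiff_id.const_smul _)
  have hnorm : ∀ (j : ℕ) (ξ : En n), ‖((2:ℝ) ^ j)⁻¹ • ξ‖ = ‖ξ‖ / 2 ^ j := by
    intro j ξ
    rw [norm_smul, norm_inv, norm_pow, Real.norm_ofNat, inv_mul_eq_div]
  have hΦ1 : ∀ j ξ, ‖ξ‖ ≤ 2 ^ j → Φ j ξ = 1 := by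
    intro j ξ h
    apply hφ1
    rw [hnorm, div_le_one (by positivity)]; exact h
  have hΦ0 : ∀ j ξ, 2 * 2 ^ j ≤ ‖ξ‖ → Φ j ξ = 0 := by
    intro j ξ h
    apply hφ0
    rw [hnorm, le_div_iff₀ (by positivity)]; exact h
  have hΦd : ∀ k : ℕ, ∃ C : ℝ, 0 ≤ C ∧ ∀ j i ξ, ‖(pd i)^[k] (Φ j) ξ‖ ≤ C * ((2 ^ j)⁻¹) ^ k := by
    intro k
    have : ∀ i : Fin n, ∃ C : ℝ, ∀ ξ, ‖(pd i)^[k] φ ξ‖ ≤ C := fun i =>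
      (pd_iter_compact i hφc k).exists_bound_of_continuous (pd_iter_contDiff i hφs k).continuous
    choose C hC using this
    refine ⟨∑ i, |C i|, Finset.sum_nonneg fun i _ => abs_nonneg _, ?_⟩
    intro j i ξ
    simp only [hΦ]
    rw [pd_iter_scale i hφs, norm_mul, Complex.norm_real, Real.norm_of_nonneg (by positivity),
      mul_comm]
    gcongr
    refine (hC i _).trans ((le_abs_self _).trans ?_)
    exact Finset.single_le_sum (f := fun i => |C i|) (fun i _ => abs_nonneg _) (Finset.mem_univ i)
  have hsum : ∀ J ξ, ∑ j ∈ Finset.range (J+1), (if j = 0 then Φ 0 ξ else Φ j ξ - Φ (j-1) ξ) = Φ J ξ := by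
    intro J ξ
    induction J with
    | zero => simp
    | succ J ih => rw [Finset.sum_range_succ, ih]; simp
  have hΦr : ∀ j ξ, ∃ r : ℝ, 0 ≤ r ∧ r ≤ 1 ∧ Φ j ξ = (r : ℂ) := fun j ξ =>
    ⟨_, b.nonneg, b.le_one, rfl⟩
  have hΦb : ∀ j ξ, ‖Φ j ξ‖ ≤ 1 := by
    intro j ξ
    obtain ⟨r, h0, h1, h⟩ := hΦr j ξ
    rw [h, Complex.norm_real, Real.norm_of_nonneg h0]; exact h1
  refine ⟨fun j ξ => if j = 0 then Φ 0 ξ else Φ j ξ - Φ (j-1) ξ, ?_, ?_, ?_, ?_, ?_, ?_⟩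
  · intro j
    by_cases hj : j = 0
    · simp only [hj, if_true]; exact hΦs 0
    · simp only [hj, if_false]; exact (hΦs j).sub (hΦs _)
  · intro j ξ hξ
    by_contra hne
    apply hξ
    rcases j with _ | j
    · simp only [if_true] at hne
      have h2 : ‖ξ‖ < 2 := by
        by_contra h
        exact hne (hΦ0 0 ξ (by simpa using h))
      constructor
      · apply Real.le_sqrt_of_sq_le; norm_num; nlinarith [norm_nonneg ξ]
      · apply Real.sqrt_le_iff.2 ⟨by positivity, _⟩; norm_num; nlinarith [norm_nonneg ξ]
    · simp only [Nat.add_one_ne_zero, if_false, Nat.add_sub_cancel] at hne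
      have h2 : ‖ξ‖ < 2 * 2 ^ (j+1) := by
        by_contra! h
        apply hne
        rw [hΦ0 _ _ h, hΦ0 _ _ (le_trans _ h), sub_zero]
        rw [pow_succ]; nlinarith [show (0:ℝ) < 2 ^ j by positivity]
      have h1 : 2 ^ j < ‖ξ‖ := by
        by_contra! h
        apply hne
        rw [hΦ1 j ξ h, hΦ1 (j+1) ξ (h.trans _), sub_self]
        rw [pow_succ]; nlinarith [show (0:ℝ) < 2 ^ j by positivity]
      have h3 : (1:ℝ) ≤ 2 ^ j := one_le_pow₀ (by norm_num)
      rw [pow_succ] at h2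
      constructor
      · apply Real.le_sqrt_of_sq_le; rw [pow_succ 2 j, mul_div_cancel_right₀ _ (two_ne_zero)]; nlinarith [pow_le_pow_left₀ (by positivity) h1.le 2]
      · apply Real.sqrt_le_iff.2 ⟨by positivity, _⟩; rw [pow_succ 2 j]; nlinarith [pow_le_pow_left₀ (norm_nonneg ξ) h2.le 2]
  · intro k
    obtain ⟨C, hC0, hC⟩ := hΦd k
    refine ⟨C * (1 + 2 ^ k), by positivity, ?_⟩
    intro j i ξ
    rcases j with _ | j
    · simp only [if_true]
      refine (hC 0 i ξ).trans ?_
      simp only [pow_zero, inv_one, one_pow, mul_one]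
      nlinarith [show (0:ℝ) < 2 ^ k by positivity]
    · simp only [Nat.add_one_ne_zero, if_false, Nat.add_sub_cancel]
      rw [pd_iter_sub i (hΦs _) (hΦs _)]
      refine (norm_sub_le _ _).trans ((add_le_add (hC _ i ξ) (hC _ i ξ)).trans (le_of_eq ?_))
      have : (((2:ℝ) ^ j)⁻¹) ^ k = 2 ^ k * ((2 ^ (j+1))⁻¹) ^ k := by
        rw [← mul_pow, pow_succ]; congr 1; field_simp
      rw [this]; ring
  · intro j ξ
    by_cases hj : j = 0
    · simp only [hj, if_true]; exact hΦb 0 ξ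
    · simp only [hj, if_false]
      obtain ⟨r, h0, h1, h⟩ := hΦr j ξ
      obtain ⟨r', h0', h1', h'⟩ := hΦr (j-1) ξ
      rw [h, h', ← Complex.ofReal_sub, Complex.norm_real, Real.norm_eq_abs, abs_le]
      constructor <;> linarith
  · intro J ξ
    rcases J with _ | J
    · simp
    · rw [hsum]; exact hΦb J ξ
  · intro ξ
    rw [← Filter.tendsto_add_atTop_iff_nat 1]
    simp_rw [hsum]
    apply tendsto_const_nhds.congr'
    obtain ⟨J, hJ⟩ := pow_unbounded_of_one_lt ‖ξ‖ (by norm_num : (1:ℝ) < 2)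
    filter_upwards [Filter.eventually_ge_atTop J] with j hj
    exact (hΦ1 j ξ (hJ.le.trans (pow_le_pow_right₀ (by norm_num) hj))).symm

lemma norm_cexp_I_mul (t : ℝ) : ‖Complex.exp (Complex.I * Complex.ofReal t)‖ = 1 := by
  rw [mul_comm]; exact Complex.norm_exp_ofReal_mul_I t

lemma osc_fubini {n : ℕ} {g f : En n → ℂ} (hg : Integrable g volume) (hf : Integrable f volume)
    (x : En n) :
    ∫ ξ, Complex.exp (Complex.I * Complex.ofReal ⟪x, ξ⟫) * g ξ * ft f ξ =
      ∫ z, osc g z * f (x - z) := by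
  have h0 : Integrable (fun q : En n × En n =>
      Complex.exp (Complex.I * Complex.ofReal ⟪x - q.2, q.1⟫) * (g q.1 * f q.2))
      (volume.prod volume) := by
    refine (hg.mul_prod hf).bdd_mul (c := 1) (Continuous.aestronglyMeasurable (by fun_prop)) ?_
    exact Filter.Eventually.of_forall fun q => (norm_cexp_I_mul _).le
  have h1 : ∫ ξ, Complex.exp (Complex.I * Complex.ofReal ⟪x, ξ⟫) * g ξ * ft f ξ =
      ∫ ξ, ∫ y, Complex.exp (Complex.I * Complex.ofReal ⟪x - y, ξ⟫) * (g ξ * f y) := by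
    congr 1; ext ξ
    unfold ft
    rw [← integral_const_mul]
    congr 1; ext y
    have : Complex.exp (Complex.I * Complex.ofReal ⟪x - y, ξ⟫) =
      Complex.exp (Complex.I * Complex.ofReal ⟪x, ξ⟫) *
        Complex.exp (-(Complex.I * Complex.ofReal ⟪y, ξ⟫)) := by
      rw [← Complex.exp_add, inner_sub_left]
      congr 1; push_cast; ring
    rw [this]; ring
  rw [h1, integral_integral_swap h0,
    ← integral_sub_left_eq_self (fun z => osc g z * f (x - z)) volume x]
  congr 1; ext y
  unfold osc
  rw [← integral_mul_const]
  congr 1; ext ξ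
  rw [sub_sub_cancel]; ring

/-- Polynomial weight. -/
def wt {n : ℕ} (N : ℕ) (R : ℝ) (z : En n) : ℝ := 1 + ∑ i, R ^ N * |z i| ^ N

lemma wt_pos {n : ℕ} (N : ℕ) {R : ℝ} (hR : 0 ≤ R) (z : En n) : 1 ≤ wt N R z := by
  unfold wt
  have : 0 ≤ ∑ i, R ^ N * |z i| ^ N := Finset.sum_nonneg fun i _ => by positivity
  linarith

lemma wt_cont {n : ℕ} (N : ℕ) (R : ℝ) : Continuous (wt (n := n) N R) := by
  unfold wt; fun_prop

lemma wt_osc {n : ℕ} {g : En n → ℂ} (hg : ContDiff ℝ (⊤ : ℕ∞) g) (hc : HasCompactSupport g)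
    {s s' : ℝ≥0∞} (hs' : 1 ≤ s') {K : ℝ≥0∞}
    (hK : ∀ g : En n → ℂ, Integrable g volume → eLpNorm (osc g) s' volume ≤ K * eLpNorm g s volume)
    (N : ℕ) {R : ℝ} (hR : 0 ≤ R) :
    eLpNorm (fun z => (wt N R z : ℂ) * osc g z) s' volume ≤
      K * (eLpNorm g s volume +
        ∑ i, ENNReal.ofReal (R ^ N) * eLpNorm ((pd i)^[N] g) s volume) := by
  have hInt0 : ∀ i, Integrable ((pd i)^[N] g) volume := fun i =>
    (pd_iter_contDiff i hg N).continuous.integrable_of_hasCompactSupport (pd_iter_compact i hc N)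
  have hgi : Integrable g volume := hg.continuous.integrable_of_hasCompactSupport hc
  have hc1 : ∀ i, Continuous (fun z => ‖osc ((pd i)^[N] g) z‖) := fun i =>
    (osc_continuous (hInt0 i)).norm
  have hc0 : Continuous (fun z => ‖osc g z‖) := (osc_continuous hgi).norm
  have h1 : eLpNorm (fun z => (wt N R z : ℂ) * osc g z) s' volume =
      eLpNorm ((fun z => ‖osc g z‖) +
        ∑ i, (R ^ N) • (fun z => ‖osc ((pd i)^[N] g) z‖)) s' volume := by
    rw [← eLpNorm_norm]
    congr 1; ext z
    simp only [norm_mul, Complex.norm_real, Pi.add_apply, Finset.sum_apply, Pi.smul_apply,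
      smul_eq_mul, osc_pd_iter _ hg hc]
    rw [Real.norm_of_nonneg (zero_le_one.trans (wt_pos N hR z)), wt, add_mul, one_mul,
      Finset.sum_mul]
    simp only [mul_assoc]
  rw [h1, mul_add, Finset.mul_sum]
  refine (eLpNorm_add_le hc0.aestronglyMeasurable ?_ hs').trans ?_
  · exact Finset.aestronglyMeasurable_sum _ fun i _ => ((hc1 i).const_smul (R ^ N)).aestronglyMeasurable
  gcongr
  · rw [eLpNorm_norm]; exact hK g hgi
  · refine (eLpNorm_sum_le (fun i _ => ((hc1 i).const_smul (R ^ N)).aestronglyMeasurable) hs').trans ?_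
    gcongr with i
    rw [eLpNorm_const_smul, eLpNorm_norm, Real.enorm_eq_ofReal (by positivity)]
    rw [mul_left_comm]
    gcongr
    exact hK _ (hInt0 i)

lemma piece_holder {n : ℕ} {g f : En n → ℂ} (hg : Integrable g volume) (hfc : Continuous f)
    (hf : Integrable f volume) {s s' : ℝ≥0∞} (hss : s⁻¹ + s'⁻¹ = 1) (N : ℕ) {R : ℝ} (hR : 0 ≤ R)
    (x : En n) :
    ‖∫ ξ, Complex.exp (Complex.I * Complex.ofReal ⟪x, ξ⟫) * g ξ * ft f ξ‖ₑ ≤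
      eLpNorm (fun z => (wt N R z : ℂ) * osc g z) s' volume *
        eLpNorm (fun z => (((wt N R z)⁻¹ : ℝ) : ℂ) * f (x - z)) s volume := by
  rw [osc_fubini hg hf]
  have : ENNReal.HolderTriple s' s 1 := ⟨by rw [add_comm, hss, inv_one]⟩
  have hw0 : ∀ z : En n, wt N R z ≠ 0 := fun z => (zero_lt_one.trans_le (wt_pos N hR z)).ne'
  have h := eLpNorm_smul_le_mul_eLpNorm (p := s') (q := s) (r := 1) (μ := (volume : Measure (En n)))
    (f := fun z => (((wt N R z)⁻¹ : ℝ) : ℂ) * f (x - z))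
    (φ := fun z => (wt N R z : ℂ) * osc g z) ?_ ?_
  · refine le_trans ?_ h
    refine (enorm_integral_le_lintegral_enorm _).trans (le_of_eq ?_)
    rw [eLpNorm_one_eq_lintegral_enorm]
    congr 1; ext z
    congr 1
    have : (wt N R z : ℂ) ≠ 0 := by exact_mod_cast hw0 z
    simp only [Pi.smul_apply', smul_eq_mul, Complex.ofReal_inv]
    field_simp
  · have h1 : Continuous fun z : En n => (wt N R z)⁻¹ := (wt_cont N R).inv₀ hw0
    exact ((Complex.continuous_ofReal.comp h1).mul (hfc.comp (by fun_prop))).aestronglyMeasurable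
  · exact ((Complex.continuous_ofReal.comp (wt_cont N R)).mul (osc_continuous hg)).aestronglyMeasurable

/-- The amplitude-side quantity. -/
def Aq {n : ℕ} (s : ℝ≥0∞) (N j : ℕ) (R : ℝ) (b : En n → ℂ) : ℝ≥0∞ :=
  eLpNorm b s (volume.restrict (shell n j)) +
    ∑ i, ∑ kl ∈ Finset.HasAntidiagonal.antidiagonal N, ENNReal.ofReal (R ^ kl.2) *
      eLpNorm ((pd i)^[kl.2] b) s (volume.restrict (shell n j))

lemma restrict_bound {n j : ℕ} {s : ℝ≥0∞} {g : En n → ℂ} {h : En n → ℝ}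
    (hg : ∀ ξ, ξ ∉ shell n j → g ξ = 0) (hgh : ∀ ξ, ‖g ξ‖ ≤ h ξ) :
    eLpNorm g s volume ≤ eLpNorm h s (volume.restrict (shell n j)) := by
  have : g = (shell n j).indicator g := by
    ext ξ
    by_cases hξ : ξ ∈ shell n j
    · simp [hξ]
    · simp [hξ, hg ξ hξ]
  rw [this, eLpNorm_indicator_eq_eLpNorm_restrict (shell_closed n j).measurableSet]
  exact eLpNorm_mono_real hgh

lemma piece_bound (n : ℕ) {s s' : ℝ≥0∞} (h1 : 1 ≤ s) (h2 : s ≤ 2) (hss : s⁻¹ + s'⁻¹ = 1) (N : ℕ)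
    (ψ : ℕ → En n → ℂ) (hψs : ∀ j, ContDiff ℝ (⊤ : ℕ∞) (ψ j))
    (hψ0 : ∀ j ξ, ξ ∉ shell n j → ψ j ξ = 0)
    (hψd : ∀ k : ℕ, ∃ C : ℝ, 0 ≤ C ∧ ∀ j i ξ, ‖(pd i)^[k] (ψ j) ξ‖ ≤ C * ((2 ^ j)⁻¹) ^ k)
    (hψ1 : ∀ j ξ, ‖ψ j ξ‖ ≤ 1) :
    ∃ C : ℝ≥0∞, C ≠ ⊤ ∧ ∀ (j : ℕ) (R : ℝ), 0 ≤ R → R ≤ 2 ^ j → ∀ (b f : En n → ℂ),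
      ContDiff ℝ (⊤ : ℕ∞) b → Continuous f → Integrable f volume → ∀ x,
      ‖∫ ξ, Complex.exp (Complex.I * Complex.ofReal ⟪x, ξ⟫) * (ψ j ξ * b ξ) * ft f ξ‖ₑ ≤
        C * (Aq s N j R b * eLpNorm (fun z => (((wt N R z)⁻¹ : ℝ) : ℂ) * f (x - z)) s volume) := by
  obtain ⟨K, hKt, hK⟩ := hausdorff_young n s s' h1 h2 hss
  have hs' : 1 ≤ s' := by
    rw [← ENNReal.inv_le_inv, inv_one, ← hss]; exact le_add_self
  choose D hD0 hD using hψd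
  set E : ℝ := ∑ k ∈ Finset.range (N+1), (N.choose k : ℝ) * D k with hE
  have hE0 : 0 ≤ E := Finset.sum_nonneg fun k _ => mul_nonneg (by positivity) (hD0 k)
  refine ⟨K * (1 + ENNReal.ofReal E), ENNReal.mul_ne_top hKt (by simp), ?_⟩
  intro j R hR hRj b f hb hfc hf x
  set g : En n → ℂ := fun ξ => ψ j ξ * b ξ with hg
  have hgs : ContDiff ℝ (⊤ : ℕ∞) g := (hψs j).mul hb
  have hg0 : ∀ ξ, ξ ∉ shell n j → g ξ = 0 := fun ξ hξ => by simp [hg, hψ0 j ξ hξ]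
  have hgc : HasCompactSupport g := by
    apply HasCompactSupport.intro (isCompact_closedBall (0 : En n) (4 * 2 ^ j))
    intro ξ hξ
    exact hg0 ξ fun h => hξ (shell_subset n j h)
  have hgi : Integrable g volume := hgs.continuous.integrable_of_hasCompactSupport hgc
  refine (piece_holder hgi hfc hf hss N hR x).trans ?_
  rw [← mul_assoc]
  gcongr
  refine (wt_osc hgs hgc hs' hK N hR).trans ?_
  rw [mul_assoc]
  gcongr
  rw [add_mul, one_mul]
  refine add_le_add ?_ ?_
  · refine le_trans ?_ (le_self_add : _ ≤ Aq s N j R b)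
    rw [← eLpNorm_norm b]
    apply restrict_bound hg0
    intro ξ
    rw [hg]; dsimp only
    rw [norm_mul]
    exact mul_le_of_le_one_left (norm_nonneg _) (hψ1 j ξ)
  · refine le_trans ?_ (mul_le_mul_right (le_add_self : _ ≤ Aq s N j R b) _)
    rw [Finset.mul_sum]
    refine Finset.sum_le_sum fun i _ => ?_
    have hpt : ∀ ξ, ‖(R ^ N) • (pd i)^[N] g ξ‖ ≤ (∑ kl ∈ Finset.HasAntidiagonal.antidiagonal N,
        (E * R ^ kl.2) • (fun ξ => ‖(pd i)^[kl.2] b ξ‖)) ξ := by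
      intro ξ
      rw [hg, pd_iter_mul i (hψs j) hb, norm_smul, Finset.sum_apply]
      dsimp only
      refine (mul_le_mul_of_nonneg_left (norm_sum_le _ _) (norm_nonneg _)).trans ?_
      rw [Finset.mul_sum]
      gcongr with kl hkl
      have hN : kl.1 + kl.2 = N := Finset.HasAntidiagonal.mem_antidiagonal.1 hkl
      rw [norm_mul, norm_mul, Pi.smul_apply, smul_eq_mul, Real.norm_of_nonneg (by positivity),
        ← mul_assoc, ← mul_assoc, Complex.norm_natCast]
      refine mul_le_mul_of_nonneg_right ?_ (norm_nonneg _)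
      have hle : (N.choose kl.1 : ℝ) * D kl.1 ≤ E := by
        rw [hE]
        exact Finset.single_le_sum (f := fun k => (N.choose k : ℝ) * D k)
          (fun k _ => mul_nonneg (by positivity) (hD0 k))
          (Finset.mem_range.2 (by omega))
      calc R ^ N * (N.choose kl.1 : ℝ) * ‖(pd i)^[kl.1] (ψ j) ξ‖
          ≤ R ^ N * (N.choose kl.1 : ℝ) * (D kl.1 * ((2 ^ j)⁻¹) ^ kl.1) := by
            gcongr; exact hD _ j i ξ
        _ = ((N.choose kl.1 : ℝ) * D kl.1) * (R * (2 ^ j)⁻¹) ^ kl.1 * R ^ kl.2 := by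
            rw [← hN]; ring
        _ ≤ E * 1 * R ^ kl.2 := by
            gcongr
            apply pow_le_one₀ (by positivity)
            rw [← div_eq_mul_inv]
            exact div_le_one_of_le₀ hRj (by positivity)
        _ = E * R ^ kl.2 := by ring
    calc ENNReal.ofReal (R ^ N) * eLpNorm ((pd i)^[N] g) s volume
        = eLpNorm (fun ξ => (R ^ N) • (pd i)^[N] g ξ) s volume := by
          rw [← Real.enorm_eq_ofReal (by positivity), ← eLpNorm_const_smul]; rfl
      _ ≤ _ := restrict_bound (fun ξ hξ => by
          rw [pd_iter_zero_off i (shell_closed n j) hg0 N ξ hξ, smul_zero]) hpt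
      _ ≤ _ := eLpNorm_sum_le (fun kl _ =>
          ((pd_iter_contDiff i hb kl.2).continuous.norm.const_smul _).aestronglyMeasurable) h1
      _ = _ := by
          rw [Finset.mul_sum]
          refine Finset.sum_congr rfl fun kl _ => ?_
          rw [eLpNorm_const_smul, eLpNorm_norm, Real.enorm_eq_ofReal (by positivity),
            ENNReal.ofReal_mul hE0, mul_assoc]

lemma mderiv_zero {n : ℕ} (f : En n → ℂ) : mderiv 0 f = f := by
  unfold mderiv
  have h : ∀ l : List (Fin n), l.foldr (fun j g => (pd j)^[(0 : Fin n → ℕ) j] g) f = f := by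
    intro l
    induction l with
    | nil => rfl
    | cons j l ih => rw [List.foldr_cons, ih]; rfl
  exact h _

lemma A_term {n : ℕ} {p s : ℝ≥0∞} {m ρ : ℝ} {a : En n → En n → ℂ} (ha : LpSm p m ρ a)
    (hs0 : s ≠ 0) (hst : s ≠ ⊤) (hsp : s ≤ p) (α : Fin n → ℕ)
    (hc : ∀ x, Continuous (mderiv α (a x))) :
    ∃ C : ℝ≥0∞, C ≠ ⊤ ∧ ∀ j : ℕ,
      AEMeasurable (fun x => eLpNorm (mderiv α (a x)) s (volume.restrict (shell n j))) volume ∧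
      eLpNorm (fun x => eLpNorm (mderiv α (a x)) s (volume.restrict (shell n j))) p volume ≤
        C * ENNReal.ofReal ((2:ℝ) ^ (j * (n * s⁻¹.toReal + (m - ρ * mdeg α)))) := by
  obtain ⟨-, h2, h3⟩ := ha
  obtain ⟨C, hC⟩ := h3 α
  set t := m - ρ * mdeg α with ht
  set σ := s⁻¹.toReal with hσ
  have hσ0 : 0 ≤ σ := ENNReal.toReal_nonneg
  have hV : volume (Metric.ball (0 : En n) 5) ≠ ⊤ := measure_ball_lt_top.ne
  refine ⟨volume (Metric.ball (0 : En n) 5) ^ σ * ENNReal.ofReal (|C| * 4 ^ |t|),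
    ENNReal.mul_ne_top (ENNReal.rpow_ne_top_of_nonneg hσ0 hV) ENNReal.ofReal_ne_top, ?_⟩
  intro j
  have hfin : volume (shell n j) < ⊤ :=
    (shell_volume n j).trans_lt (ENNReal.mul_lt_top ENNReal.ofReal_lt_top hV.lt_top)
  have : IsFiniteMeasure (volume.restrict (shell n j)) :=
    ⟨by rwa [Measure.restrict_apply_univ]⟩
  obtain ⟨k1, k2⟩ := mink_cont (volume.restrict (shell n j)) (fun x => mderiv α (a x)) hc (h2 α)
    hs0 hst hsp (ENNReal.ofReal (|C| * (4 ^ |t| * (2:ℝ) ^ (j * t)))) (by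
      rw [ae_restrict_iff' (shell_closed n j).measurableSet]
      refine Filter.Eventually.of_forall fun ξ hξ => (hC ξ).trans ?_
      apply ENNReal.ofReal_le_ofReal
      have hjb : 0 ≤ jb ξ t := by unfold jb; positivity
      calc C * jb ξ t ≤ |C| * jb ξ t := by gcongr; exact le_abs_self C
        _ ≤ _ := by gcongr; exact jb_shell hξ t)
  refine ⟨k1, k2.trans ?_⟩
  rw [Measure.restrict_apply_univ]
  calc _ ≤ (ENNReal.ofReal ((2:ℝ) ^ (j * n)) * volume (Metric.ball (0 : En n) 5)) ^ σ *
        ENNReal.ofReal (|C| * (4 ^ |t| * (2:ℝ) ^ (j * t))) := by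
        gcongr; exact shell_volume n j
    _ = _ := by
        rw [ENNReal.mul_rpow_of_nonneg _ _ hσ0, ENNReal.ofReal_rpow_of_nonneg (by positivity) hσ0,
          mul_add, Real.rpow_add (by norm_num), ← mul_assoc |C|,
          ENNReal.ofReal_mul (p := |C| * 4 ^ |t|) (by positivity),
          ENNReal.ofReal_mul (p := (2:ℝ) ^ _) (by positivity), ← Real.rpow_natCast,
          ← Real.rpow_mul (by norm_num)]
        push_cast
        ring_nf

lemma eLpNorm_enn_const_mul {X : Type*} [MeasurableSpace X] (μ : Measure X) (c : ℝ≥0∞)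
    (f : X → ℝ≥0∞) (hf : AEMeasurable f μ) (p : ℝ≥0∞) : eLpNorm (fun x => c * f x) p μ ≤ c * eLpNorm f p μ := by
  apply eLpNorm_le_mul_eLpNorm_of_ae_le_mul'' p hf.aestronglyMeasurable
  exact Filter.Eventually.of_forall fun x => by simp

lemma A_bound {n : ℕ} {p s : ℝ≥0∞} {m ρ : ℝ} {a : En n → En n → ℂ} (ha : LpSm p m ρ a)
    (hs0 : s ≠ 0) (hst : s ≠ ⊤) (hsp : s ≤ p) (hp : 1 ≤ p) (N : ℕ) :
    ∃ C : ℝ≥0∞, C ≠ ⊤ ∧ ∀ j : ℕ,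
      AEMeasurable (fun x => Aq s N j ((2:ℝ) ^ (j * ρ)) (a x)) volume ∧
      eLpNorm (fun x => Aq s N j ((2:ℝ) ^ (j * ρ)) (a x)) p volume ≤
        C * ENNReal.ofReal ((2:ℝ) ^ (j * (n * s⁻¹.toReal + m))) := by
  obtain ⟨C0, hC0t, hC0⟩ := A_term ha hs0 hst hsp 0
    (fun x => by rw [mderiv_zero]; exact (ha.1 x).continuous)
  have hk := fun (i : Fin n) (k : ℕ) => A_term ha hs0 hst hsp (Pi.single i k)
    (fun x => by rw [mderiv_single]; exact (pd_iter_contDiff i (ha.1 x) k).continuous)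
  choose C1 hC1t hC1 using hk
  simp only [mderiv_single, mdeg_single] at hC1
  simp only [mderiv_zero] at hC0
  refine ⟨C0 + ∑ i, ∑ kl ∈ Finset.HasAntidiagonal.antidiagonal N, C1 i kl.2, ?_, ?_⟩
  · rw [ENNReal.add_ne_top]
    refine ⟨hC0t, ?_⟩
    rw [ENNReal.sum_ne_top]
    intro i _
    rw [ENNReal.sum_ne_top]
    intro kl _
    exact hC1t _ _
  intro j
  set R := (2:ℝ) ^ (j * ρ) with hR
  set ν := (volume : Measure (En n)).restrict (shell n j) with hν
  have hm0 : AEMeasurable (fun x => eLpNorm (a x) s ν) volume := (hC0 j).1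
  have hm1 : ∀ i k, AEMeasurable (fun x => ENNReal.ofReal (R ^ k) *
      eLpNorm ((pd i)^[k] (a x)) s ν) volume := fun i k => (hC1 i k j).1.const_mul _
  have hm2 : ∀ i, AEMeasurable (fun x => ∑ kl ∈ Finset.HasAntidiagonal.antidiagonal N,
      ENNReal.ofReal (R ^ kl.2) * eLpNorm ((pd i)^[kl.2] (a x)) s ν) volume := fun i =>
    Finset.aemeasurable_fun_sum _ fun kl _ => hm1 i kl.2
  have hm3 : AEMeasurable (fun x => ∑ i, ∑ kl ∈ Finset.HasAntidiagonal.antidiagonal N,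
      ENNReal.ofReal (R ^ kl.2) * eLpNorm ((pd i)^[kl.2] (a x)) s ν) volume :=
    Finset.aemeasurable_fun_sum _ fun i _ => hm2 i
  refine ⟨hm0.add hm3, ?_⟩
  rw [add_mul]
  refine (eLpNorm_add_le (f := fun x => eLpNorm (a x) s ν) hm0.aestronglyMeasurable
    hm3.aestronglyMeasurable hp).trans ?_
  refine add_le_add ?_ ?_
  · refine (hC0 j).2.trans (le_of_eq ?_)
    simp [mdeg]
  rw [Finset.sum_mul]
  have e1 : (fun x => ∑ i, ∑ kl ∈ Finset.HasAntidiagonal.antidiagonal N,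
      ENNReal.ofReal (R ^ kl.2) * eLpNorm ((pd i)^[kl.2] (a x)) s ν) =
      ∑ i, fun x => ∑ kl ∈ Finset.HasAntidiagonal.antidiagonal N,
      ENNReal.ofReal (R ^ kl.2) * eLpNorm ((pd i)^[kl.2] (a x)) s ν := by
    ext x; rw [Finset.sum_apply]
  rw [e1]
  refine (eLpNorm_sum_le (fun i _ => (hm2 i).aestronglyMeasurable) hp).trans ?_
  refine Finset.sum_le_sum fun i _ => ?_
  rw [Finset.sum_mul]
  have e2 : (fun x => ∑ kl ∈ Finset.HasAntidiagonal.antidiagonal N,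
      ENNReal.ofReal (R ^ kl.2) * eLpNorm ((pd i)^[kl.2] (a x)) s ν) =
      ∑ kl ∈ Finset.HasAntidiagonal.antidiagonal N, fun x =>
      ENNReal.ofReal (R ^ kl.2) * eLpNorm ((pd i)^[kl.2] (a x)) s ν := by
    ext x; rw [Finset.sum_apply]
  rw [e2]
  refine (eLpNorm_sum_le (fun kl _ => (hm1 i kl.2).aestronglyMeasurable) hp).trans ?_
  refine Finset.sum_le_sum fun kl _ => ?_
  refine (eLpNorm_enn_const_mul _ _ _ (hC1 i kl.2 j).1 _).trans ?_
  refine (mul_le_mul_right (hC1 i kl.2 j).2 _).trans (le_of_eq ?_)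
  rw [mul_left_comm, ← ENNReal.ofReal_mul (by positivity), hR, ← Real.rpow_natCast,
    ← Real.rpow_mul (by norm_num), ← Real.rpow_add (by norm_num)]
  ring_nf

lemma wt_lower {n : ℕ} : ∃ c : ℝ, 0 < c ∧ ∀ z : En n, (1 + ‖z‖) ^ (n + 1) ≤ c * wt (n+1) 1 z := by
  refine ⟨2 ^ n * (1 + n ^ n), by positivity, ?_⟩
  intro z
  have h1 : ‖z‖ ≤ ∑ i, |z i| := by
    calc ‖z‖ = ‖∑ i, z i • (EuclideanSpace.basisFun (Fin n) ℝ) i‖ := by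
          congr 1
          have := (EuclideanSpace.basisFun (Fin n) ℝ).sum_repr z
          simpa using this.symm
      _ ≤ ∑ i, ‖z i • (EuclideanSpace.basisFun (Fin n) ℝ) i‖ := norm_sum_le _ _
      _ = _ := by simp [norm_smul]
  have h2 := pow_sum_div_card_le_sum_pow (s := Finset.univ) (f := fun i => |z i|)
    (fun i _ => abs_nonneg _) n
  have h3 : (∑ i, |z i|) ^ (n+1) ≤ n ^ n * ∑ i, |z i| ^ (n+1) := by
    rcases Nat.eq_zero_or_pos n with h | h
    · subst h; simp
    · rw [div_le_iff₀ (by simp; positivity)] at h2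
      simpa [mul_comm] using h2
  have h4 := add_pow_le (zero_le_one (α := ℝ)) (norm_nonneg z) (n+1)
  have h5 : 0 ≤ ∑ i, |z i| ^ (n+1) := Finset.sum_nonneg fun i _ => by positivity
  have h6 : ‖z‖ ^ (n+1) ≤ n ^ n * ∑ i, |z i| ^ (n+1) := (pow_le_pow_left₀ (norm_nonneg z) h1 _).trans h3
  simp only [one_pow, Nat.add_sub_cancel] at h4
  refine h4.trans ?_
  rw [mul_assoc]
  unfold wt
  simp only [one_pow, one_mul]
  gcongr
  have h7 : (0:ℝ) ≤ n ^ n := by positivity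
  nlinarith

lemma B_bound (n : ℕ) {q s : ℝ≥0∞} (h1 : 1 ≤ s) (hst : s ≠ ⊤) (hsq : s ≤ q) :
    ∃ C : ℝ≥0∞, C ≠ ⊤ ∧ ∀ R : ℝ, 0 < R → ∀ f : En n → ℂ, Continuous f →
      AEMeasurable (fun x => eLpNorm (fun z => (((wt (n+1) R z)⁻¹ : ℝ) : ℂ) * f (x - z)) s volume)
        volume ∧
      eLpNorm (fun x => eLpNorm (fun z => (((wt (n+1) R z)⁻¹ : ℝ) : ℂ) * f (x - z)) s volume) q
        volume ≤ C * ENNReal.ofReal (R ^ (-(n * s⁻¹.toReal))) * eLpNorm f q volume := by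
  have hs0 : s ≠ 0 := (zero_lt_one.trans_le h1).ne'
  have hsr : 0 < s.toReal := ENNReal.toReal_pos hs0 hst
  have hs1 : 1 ≤ s.toReal := by
    simpa using ENNReal.toReal_mono hst h1
  set σ := s⁻¹.toReal with hσ
  have hσ0 : 0 ≤ σ := ENNReal.toReal_nonneg
  set I : ℝ≥0∞ := ∫⁻ z : En n, ENNReal.ofReal ((wt (n+1) 1 z)⁻¹) ^ s.toReal with hI
  have hIt : I ≠ ⊤ := by
    obtain ⟨c, hc0, hc⟩ := wt_lower (n := n)
    have hfin := finite_integral_one_add_norm (E := En n) (μ := volume) (r := n + 1) (by simp)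
    have : I ≤ ENNReal.ofReal c * ∫⁻ x : En n, ENNReal.ofReal ((1 + ‖x‖) ^ (-((n:ℝ) + 1))) := by
      rw [← lintegral_const_mul' _ _ ENNReal.ofReal_ne_top]
      apply lintegral_mono
      intro z
      dsimp only
      have hw := wt_pos (n+1) zero_le_one z
      have h3 : ENNReal.ofReal ((wt (n+1) 1 z)⁻¹) ≤ 1 := by
        rw [ENNReal.ofReal_le_one]; exact inv_le_one_of_one_le₀ hw
      refine (ENNReal.rpow_le_rpow_of_exponent_ge h3 hs1).trans ?_
      rw [ENNReal.rpow_one, ← ENNReal.ofReal_mul hc0.le]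
      apply ENNReal.ofReal_le_ofReal
      rw [Real.rpow_neg (by positivity), ← div_eq_mul_inv, inv_le_comm₀ (by linarith) (by positivity),
        inv_div, div_le_iff₀ hc0, mul_comm]
      have := hc z
      rw [← Real.rpow_natCast] at this
      push_cast at this
      exact this
    exact (this.trans_lt (ENNReal.mul_lt_top ENNReal.ofReal_lt_top hfin)).ne
  refine ⟨I ^ σ, ENNReal.rpow_ne_top_of_nonneg hσ0 hIt, ?_⟩
  intro R hR f hf
  have hw0 : ∀ z : En n, wt (n+1) R z ≠ 0 := fun z => (zero_lt_one.trans_le (wt_pos _ hR.le z)).ne'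
  set d : En n → ℝ≥0∞ := fun z => ENNReal.ofReal ((wt (n+1) R z)⁻¹) ^ s.toReal with hd
  have hdm : Measurable d :=
    (((wt_cont (n+1) R).inv₀ hw0).measurable.ennreal_ofReal).pow_const _
  set ν : Measure (En n) := volume.withDensity d with hν
  have hmass : ν Set.univ = ENNReal.ofReal ((R ^ n)⁻¹) * I := by
    have h2 : ∀ z : En n, d z = (fun z => ENNReal.ofReal ((wt (n+1) 1 z)⁻¹) ^ s.toReal) (R • z) := by
      intro z
      simp only [hd, wt]
      simp [abs_mul, mul_pow, abs_of_pos hR]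
    have h3 : Measurable (fun z : En n => ENNReal.ofReal ((wt (n+1) 1 z)⁻¹) ^ s.toReal) :=
      (((wt_cont (n+1) 1).measurable.inv).ennreal_ofReal).pow_const _
    rw [hν, withDensity_apply _ MeasurableSet.univ, Measure.restrict_univ, lintegral_congr h2,
      ← lintegral_map h3 (measurable_const_smul R), Measure.map_addHaar_smul _ hR.ne',
      lintegral_smul_measure, smul_eq_mul]
    simp [abs_of_pos hR, hI]
  have : IsFiniteMeasure ν := ⟨by
    rw [hmass]; exact ENNReal.mul_lt_top ENNReal.ofReal_lt_top hIt.lt_top⟩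
  have hfm : Measurable (Function.uncurry fun x z : En n => ‖f (x - z)‖ₑ) := by
    have : Continuous fun w : En n × En n => f (w.1 - w.2) := hf.comp (by fun_prop)
    exact this.measurable.enorm
  have key := mink volume ν (fun x z : En n => ‖f (x - z)‖ₑ) hfm hs0 hst hsq (eLpNorm f q volume)
    (Filter.Eventually.of_forall fun z => by
      rw [eLpNorm_enorm]
      exact (eLpNorm_comp_measurePreserving hf.aestronglyMeasurable
        (measurePreserving_sub_right volume z)).le)
  have heq : ∀ x, eLpNorm (fun z => (((wt (n+1) R z)⁻¹ : ℝ) : ℂ) * f (x - z)) s volume =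
      eLpNorm (fun z : En n => ‖f (x - z)‖ₑ) s ν := by
    intro x
    have hfx : Measurable fun z : En n => ‖f (x - z)‖ₑ ^ s.toReal :=
      ((hf.comp (by fun_prop : Continuous fun z : En n => x - z)).measurable.enorm).pow_const _
    rw [eLpNorm_eq_lintegral_rpow_enorm_toReal hs0 hst,
      eLpNorm_eq_lintegral_rpow_enorm_toReal hs0 hst]
    congr 1
    simp_rw [enorm_eq_self]
    rw [hν, lintegral_withDensity_eq_lintegral_mul _ hdm hfx]
    congr 1; ext z
    rw [Pi.mul_apply, enorm_mul, ENNReal.mul_rpow_of_nonneg _ _ hsr.le]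
    congr 2
    rw [← ofReal_norm, Complex.norm_real, Real.norm_of_nonneg]
    exact inv_nonneg.2 (zero_le_one.trans (wt_pos _ hR.le z))
  simp_rw [heq]
  refine ⟨key.1, key.2.trans (le_of_eq ?_)⟩
  congr 1
  rw [hmass, ENNReal.mul_rpow_of_nonneg _ _ hσ0, ENNReal.ofReal_rpow_of_nonneg (by positivity) hσ0,
    mul_comm]
  congr 2
  rw [← Real.rpow_natCast, ← Real.rpow_neg hR.le, ← Real.rpow_mul hR.le]
  ring_nf

lemma fio_pointwise {n : ℕ} (ψ : ℕ → En n → ℂ) (hψs : ∀ j, ContDiff ℝ (⊤ : ℕ∞) (ψ j))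
    (hψ1 : ∀ j ξ, ‖ψ j ξ‖ ≤ 1)
    (hψJ : ∀ J ξ, ‖∑ j ∈ Finset.range J, ψ j ξ‖ ≤ 1)
    (hψt : ∀ ξ, Filter.Tendsto (fun J => ∑ j ∈ Finset.range J, ψ j ξ) Filter.atTop (nhds 1))
    (a : En n → En n → ℂ) (f : En n → ℂ) (x : En n) :
    ‖fio a (fun x ξ => ⟪x, ξ⟫) f x‖ₑ ≤ ∑' j,
      ‖∫ ξ, Complex.exp (Complex.I * Complex.ofReal ⟪x, ξ⟫) * (ψ j ξ * a x ξ) * ft f ξ‖ₑ := by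
  set G : En n → ℂ := fun ξ => Complex.exp (Complex.I * Complex.ofReal ⟪x, ξ⟫) * a x ξ * ft f ξ
    with hG
  have h0 : ‖fio a (fun x ξ => ⟪x, ξ⟫) f x‖ₑ ≤ ‖∫ ξ, G ξ‖ₑ := by
    unfold fio
    rw [enorm_smul]
    apply mul_le_of_le_one_left'
    rw [Real.enorm_eq_ofReal (by positivity), ENNReal.ofReal_le_one]
    apply inv_le_one_of_one_le₀
    apply one_le_pow₀
    nlinarith [Real.pi_gt_three]
  refine h0.trans ?_
  by_cases hGi : Integrable G volume
  swap
  · rw [integral_undef hGi]; simp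
  have hp : ∀ j, Integrable (fun ξ => ψ j ξ * G ξ) volume := fun j =>
    hGi.bdd_mul (c := 1) (hψs j).continuous.aestronglyMeasurable
      (Filter.Eventually.of_forall (hψ1 j))
  have hlim : Filter.Tendsto (fun J => ∫ ξ, (∑ j ∈ Finset.range J, ψ j ξ) * G ξ) Filter.atTop
      (nhds (∫ ξ, G ξ)) := by
    apply tendsto_integral_of_dominated_convergence (fun ξ => ‖G ξ‖)
    · intro J
      exact (Continuous.aestronglyMeasurable
        (continuous_finset_sum _ fun j _ => (hψs j).continuous)).mul hGi.1
    · exact hGi.norm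
    · intro J
      refine Filter.Eventually.of_forall fun ξ => ?_
      rw [norm_mul]
      exact mul_le_of_le_one_left (norm_nonneg _) (hψJ J ξ)
    · refine Filter.Eventually.of_forall fun ξ => ?_
      simpa using (hψt ξ).mul_const (G ξ)
  refine le_of_tendsto hlim.enorm (Filter.Eventually.of_forall fun J => ?_)
  have h1 : ∫ ξ, (∑ j ∈ Finset.range J, ψ j ξ) * G ξ = ∑ j ∈ Finset.range J, ∫ ξ, ψ j ξ * G ξ := by
    simp_rw [Finset.sum_mul]
    exact integral_finset_sum _ fun j _ => hp j
  rw [h1]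
  refine (enorm_sum_le _ _).trans ?_
  refine le_trans (le_of_eq ?_) (ENNReal.sum_le_tsum (Finset.range J))
  refine Finset.sum_congr rfl fun j _ => ?_
  congr 2; ext ξ
  rw [hG]; ring

lemma tsum_mink {X : Type*} [MeasurableSpace X] (μ : Measure X) [SFinite μ] (A : ℕ → X → ℝ≥0∞)
    (hA : ∀ j, AEMeasurable (A j) μ) (c : ℕ → ℝ≥0∞) (hc : ∑' j, c j ≠ ⊤) {p : ℝ≥0∞} (hp : 1 ≤ p)
    (M : ℝ≥0∞) (hM : ∀ j, eLpNorm (A j) p μ ≤ M) :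
    eLpNorm (fun x => ∑' j, c j * A j x) p μ ≤ (∑' j, c j) * M := by
  set ν : Measure ℕ := Measure.sum fun j => c j • Measure.dirac j with hν
  have hu : ν Set.univ = ∑' j, c j := by
    rw [hν, Measure.sum_apply _ MeasurableSet.univ]; simp
  have : IsFiniteMeasure ν := ⟨by rw [hu]; exact hc.lt_top⟩
  have key := mink μ ν (fun x j => (hA j).mk _ x)
    (measurable_from_prod_countable_left fun j => (hA j).measurable_mk) one_ne_zero
    ENNReal.one_ne_top hp M (Filter.Eventually.of_forall fun j => by
      rw [eLpNorm_congr_ae (hA j).ae_eq_mk.symm]; exact hM j)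
  rw [hu] at key
  simp only [inv_one, ENNReal.toReal_one, ENNReal.rpow_one] at key
  refine le_trans (le_of_eq ?_) key.2
  apply eLpNorm_congr_ae
  have hall : ∀ᵐ x ∂μ, ∀ j, A j x = (hA j).mk _ x := ae_all_iff.2 fun j => (hA j).ae_eq_mk
  filter_upwards [hall] with x hx
  rw [eLpNorm_one_eq_lintegral_enorm, hν, lintegral_sum_measure]
  congr 1; ext j
  rw [lintegral_smul_measure, lintegral_dirac, enorm_eq_self, hx j, smul_eq_mul]

lemma enn_holder {X : Type*} [MeasurableSpace X] (μ : Measure X) {U V : X → ℝ≥0∞}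
    (hU : AEMeasurable U μ) (hV : AEMeasurable V μ) {p q r : ℝ≥0∞} (hp : 1 ≤ p) (hq : 1 ≤ q)
    (hrpq : r⁻¹ = q⁻¹ + p⁻¹) :
    eLpNorm (fun x => U x * V x) r μ ≤ eLpNorm U p μ * eLpNorm V q μ := by
  have hp0 : p ≠ 0 := (zero_lt_one.trans_le hp).ne'
  have hq0 : q ≠ 0 := (zero_lt_one.trans_le hq).ne'
  by_cases hpt : p = ⊤
  · subst hpt
    have : r = q := by simpa using hrpq
    subst this
    apply eLpNorm_le_mul_eLpNorm_of_ae_le_mul'' r hV.aestronglyMeasurable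
    rw [eLpNorm_exponent_top]
    filter_upwards [ae_le_eLpNormEssSup (f := U) (μ := μ)] with x hx
    simp only [enorm_eq_self] at hx ⊢
    gcongr
  by_cases hqt : q = ⊤
  · subst hqt
    have : r = p := by simpa using hrpq
    subst this
    rw [mul_comm]
    apply eLpNorm_le_mul_eLpNorm_of_ae_le_mul'' r hU.aestronglyMeasurable
    rw [eLpNorm_exponent_top]
    filter_upwards [ae_le_eLpNormEssSup (f := V) (μ := μ)] with x hx
    simp only [enorm_eq_self] at hx ⊢
    rw [mul_comm]
    gcongr
  have hpr : 0 < p.toReal := ENNReal.toReal_pos hp0 hpt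
  have hqr : 0 < q.toReal := ENNReal.toReal_pos hq0 hqt
  have hr0 : r ≠ 0 := by
    intro h; subst h
    rw [ENNReal.inv_zero] at hrpq
    have := ENNReal.add_ne_top.2 ⟨ENNReal.inv_ne_top.2 hq0, ENNReal.inv_ne_top.2 hp0⟩
    exact this hrpq.symm
  have hrt : r ≠ ⊤ := by
    intro h; subst h
    rw [ENNReal.inv_top] at hrpq
    have := (add_eq_zero.1 hrpq.symm).2
    simp [hpt] at this
  have hrr : 0 < r.toReal := ENNReal.toReal_pos hr0 hrt
  have hre : 1 / r.toReal = 1 / p.toReal + 1 / q.toReal := by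
    have := congrArg ENNReal.toReal hrpq
    rw [ENNReal.toReal_add (ENNReal.inv_ne_top.2 hq0) (ENNReal.inv_ne_top.2 hp0)] at this
    simp only [ENNReal.toReal_inv] at this
    simp only [one_div]; rw [this]; ring
  have hlt : r.toReal < p.toReal := by
    have h1 : 1 / p.toReal < 1 / r.toReal := by
      rw [hre]; have : 0 < 1 / q.toReal := by positivity
      linarith
    exact (one_div_lt_one_div hpr hrr).1 h1
  rw [eLpNorm_eq_lintegral_rpow_enorm_toReal hr0 hrt, eLpNorm_eq_lintegral_rpow_enorm_toReal hp0 hpt,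
    eLpNorm_eq_lintegral_rpow_enorm_toReal hq0 hqt]
  simp_rw [enorm_eq_self]
  exact ENNReal.lintegral_Lp_mul_le_Lq_mul_Lr hrr hlt hre μ hU hV

lemma seq_holder {X : Type*} [MeasurableSpace X] (μ : Measure X) [SFinite μ]
    (A B : ℕ → X → ℝ≥0∞) (hA : ∀ j, AEMeasurable (A j) μ) (hB : ∀ j, AEMeasurable (B j) μ)
    {p q r : ℝ≥0∞} (hp : 1 ≤ p) (hq : 1 ≤ q) (hrpq : r⁻¹ = q⁻¹ + p⁻¹)
    (u v c : ℕ → ℝ≥0∞) (hu0 : ∀ j, u j ≠ 0) (hut : ∀ j, u j ≠ ⊤) (hv0 : ∀ j, v j ≠ 0)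
    (hvt : ∀ j, v j ≠ ⊤) (hc : ∑' j, c j ≠ ⊤) (huv : ∀ j, u j * v j = c j * c j)
    (CA CB : ℝ≥0∞) (hAp : ∀ j, eLpNorm (A j) p μ ≤ CA * u j)
    (hBq : ∀ j, eLpNorm (B j) q μ ≤ CB * v j) :
    eLpNorm (fun x => ∑' j, A j x * B j x) r μ ≤
      ((∑' j, c j) * CA) * ((∑' j, c j) * CB) := by
  have haux : ∀ (A : ℕ → X → ℝ≥0∞) (u : ℕ → ℝ≥0∞) (C t : ℝ≥0∞), (∀ j, AEMeasurable (A j) μ) →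
      (∀ j, u j ≠ 0) → (∀ j, u j ≠ ⊤) → (∀ j, eLpNorm (A j) t μ ≤ C * u j) → 1 ≤ t →
      AEMeasurable (fun x => ∑' j, c j * ((u j)⁻¹ * A j x)) μ ∧
      eLpNorm (fun x => ∑' j, c j * ((u j)⁻¹ * A j x)) t μ ≤ (∑' j, c j) * C := by
    intro A u C t hA hu0 hut hAt ht
    refine ⟨AEMeasurable.ennreal_tsum fun j => ((hA j).const_mul _).const_mul _, ?_⟩
    refine tsum_mink μ (fun j x => (u j)⁻¹ * A j x) (fun j => (hA j).const_mul _) c hc ht C ?_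
    intro j
    refine (eLpNorm_enn_const_mul μ _ _ (hA j) t).trans ?_
    refine (mul_le_mul_right (hAt j) _).trans (le_of_eq ?_)
    rw [mul_left_comm, ENNReal.inv_mul_cancel (hu0 j) (hut j), mul_one]
  obtain ⟨a1, a2⟩ := haux A u CA p hA hu0 hut hAp hp
  obtain ⟨b1, b2⟩ := haux B v CB q hB hv0 hvt hBq hq
  refine le_trans ?_ ((enn_holder μ a1 b1 hp hq hrpq).trans (mul_le_mul' a2 b2))
  apply eLpNorm_mono_enorm
  intro x
  simp only [enorm_eq_self]
  rw [← ENNReal.tsum_mul_left]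
  apply ENNReal.tsum_le_tsum
  intro j
  calc A j x * B j x = (u j * v j) * ((u j)⁻¹ * (v j)⁻¹) * (A j x * B j x) := by
        rw [mul_mul_mul_comm (u j) (v j) (u j)⁻¹ (v j)⁻¹, ENNReal.mul_inv_cancel (hu0 j) (hut j),
          ENNReal.mul_inv_cancel (hv0 j) (hvt j), one_mul, one_mul]
    _ = (c j * ((u j)⁻¹ * A j x)) * (c j * ((v j)⁻¹ * B j x)) := by rw [huv]; ring
    _ ≤ _ := by
        gcongr
        exact ENNReal.le_tsum (f := fun j => c j * ((u j)⁻¹ * A j x)) j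

/-- Theorem 4.10: boundedness of rough pseudodifferential operators. -/
theorem statement8 {n : ℕ} (r p q : ℝ≥0∞) (hr : 0 < r) (hp : 1 ≤ p) (hq : 1 ≤ q)
    (hrpq : r⁻¹ = q⁻¹ + p⁻¹)
    (m ρ : ℝ) (hρ0 : 0 ≤ ρ) (hρ1 : ρ ≤ 1)
    (hm : m < (n : ℝ) * (ρ - 1) * (min 2 (min p q))⁻¹.toReal)
    (a : En n → En n → ℂ) (ha : LpSm p m ρ a) :
    ∃ C : ℝ, 0 < C ∧ ∀ f : 𝓢(En n, ℂ),
      eLpNorm (fio a (fun x ξ => ⟪x, ξ⟫) (⇑f)) r volume ≤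
        ENNReal.ofReal C * eLpNorm (⇑f) q volume := by
  obtain ⟨s, hs⟩ : ∃ s, s = min 2 (min p q) := ⟨_, rfl⟩
  rw [← hs] at hm
  have h1 : 1 ≤ s := by rw [hs]; exact le_min (by norm_num) (le_min hp hq)
  have h2 : s ≤ 2 := by rw [hs]; exact min_le_left _ _
  have hsp : s ≤ p := by rw [hs]; exact (min_le_right _ _).trans (min_le_left _ _)
  have hsq : s ≤ q := by rw [hs]; exact (min_le_right _ _).trans (min_le_right _ _)
  have hs0 : s ≠ 0 := (zero_lt_one.trans_le h1).ne'
  have hst : s ≠ ⊤ := (h2.trans_lt (by norm_num)).ne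
  have hss : s⁻¹ + ((1 - s⁻¹)⁻¹)⁻¹ = 1 := by
    rw [inv_inv]; exact add_tsub_cancel_of_le (ENNReal.inv_le_one.2 h1)
  set σ := s⁻¹.toReal with hσ
  obtain ⟨ψ, hψs, hψ0, hψd, hψ1, hψJ, hψt⟩ := exists_cutoff n
  obtain ⟨CP, hCPt, hCP⟩ := piece_bound n h1 h2 hss (n+1) ψ hψs hψ0 hψd hψ1
  obtain ⟨CA, hCAt, hCA⟩ := A_bound ha hs0 hst hsp hp (n+1)
  obtain ⟨CB, hCBt, hCB⟩ := B_bound n (q := q) h1 hst hsq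
  set δ : ℝ := n * (ρ - 1) * σ - m with hδ
  have hδ0 : 0 < δ := by rw [hδ]; linarith
  set θ : ℝ≥0∞ := ENNReal.ofReal ((2:ℝ) ^ (-(δ / 2))) with hθ
  have hθ1 : θ < 1 := by
    rw [hθ, ENNReal.ofReal_lt_one]
    exact Real.rpow_lt_one_of_one_lt_of_neg (by norm_num) (by linarith)
  have hS : ∑' j : ℕ, θ ^ j ≠ ⊤ := by
    rw [ENNReal.tsum_geometric]
    exact ENNReal.inv_ne_top.2 (tsub_pos_iff_lt.2 hθ1).ne'
  set S := ∑' j : ℕ, θ ^ j with hSdef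
  set T := CP * ((S * CA) * (S * CB)) with hT
  have hTt : T ≠ ⊤ := ENNReal.mul_ne_top hCPt
    (ENNReal.mul_ne_top (ENNReal.mul_ne_top hS hCAt) (ENNReal.mul_ne_top hS hCBt))
  refine ⟨T.toReal + 1, by positivity, ?_⟩
  intro f
  have hRj : ∀ j : ℕ, (0:ℝ) < (2:ℝ) ^ (j * ρ) := fun j => by positivity
  set A : ℕ → En n → ℝ≥0∞ := fun j x => Aq s (n+1) j ((2:ℝ) ^ (j * ρ)) (a x) with hA
  set B : ℕ → En n → ℝ≥0∞ := fun j x => eLpNorm (fun z =>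
    (((wt (n+1) ((2:ℝ) ^ (j * ρ)) z)⁻¹ : ℝ) : ℂ) * f (x - z)) s volume with hB
  have hAm : ∀ j, AEMeasurable (A j) volume := fun j => (hCA j).1
  have hBm : ∀ j, AEMeasurable (B j) volume := fun j => (hCB _ (hRj j) f f.continuous).1
  have main := seq_holder (volume : Measure (En n)) A B hAm hBm hp hq hrpq
    (fun j => ENNReal.ofReal ((2:ℝ) ^ (j * (n * σ + m))))
    (fun j => ENNReal.ofReal (((2:ℝ) ^ (j * ρ)) ^ (-(n * σ)))) (fun j => θ ^ j)
    (fun j => (ENNReal.ofReal_pos.2 (by positivity)).ne') (fun j => ENNReal.ofReal_ne_top)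
    (fun j => (ENNReal.ofReal_pos.2 (by positivity)).ne') (fun j => ENNReal.ofReal_ne_top)
    hS (fun j => by
      rw [← ENNReal.ofReal_mul (by positivity), hθ, ← ENNReal.ofReal_pow (by positivity),
        ← ENNReal.ofReal_mul (by positivity)]
      congr 1
      rw [← Real.rpow_natCast, ← Real.rpow_mul (by norm_num), ← Real.rpow_mul (by norm_num),
        ← Real.rpow_add (by norm_num), ← Real.rpow_add (by norm_num)]
      congr 1
      rw [hδ]; ring)
    CA (CB * eLpNorm f q volume) (fun j => (hCA j).2) (fun j =>
      ((hCB _ (hRj j) f f.continuous).2).trans (le_of_eq (by ring)))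
  have hpt : ∀ x, ‖fio a (fun x ξ => ⟪x, ξ⟫) (⇑f) x‖ₑ ≤ CP * ∑' j, A j x * B j x := by
    intro x
    refine (fio_pointwise ψ hψs hψ1 hψJ hψt a f x).trans ?_
    rw [← ENNReal.tsum_mul_left]
    apply ENNReal.tsum_le_tsum
    intro j
    refine hCP j _ (hRj j).le ?_ (a x) f (ha.1 x) f.continuous f.integrable x
    rw [← Real.rpow_natCast]
    apply Real.rpow_le_rpow_of_exponent_le (by norm_num)
    exact mul_le_of_le_one_right (by positivity) hρ1
  calc eLpNorm (fio a (fun x ξ => ⟪x, ξ⟫) (⇑f)) r volume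
      ≤ eLpNorm (fun x => CP * ∑' j, A j x * B j x) r volume := by
        apply eLpNorm_mono_enorm
        intro x
        rw [enorm_eq_self]
        exact hpt x
    _ ≤ CP * eLpNorm (fun x => ∑' j, A j x * B j x) r volume :=
        eLpNorm_enn_const_mul _ _ _
          (AEMeasurable.ennreal_tsum fun j => (hAm j).mul (hBm j)) _
    _ ≤ CP * ((S * CA) * (S * (CB * eLpNorm f q volume))) := by gcongr
    _ = T * eLpNorm f q volume := by rw [hT]; ring
    _ ≤ _ := by
        gcongr
        exact (ENNReal.ofReal_toReal hTt).symm.le.trans (ENNReal.ofReal_le_ofReal (by linarith))
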